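/- arXiv:0911.1767 — 2 statements merged into one kernel-verified Lean document; each statement's English description precedes it below -/
import Mathlib

section
/- Suppose the LP relaxation of maximum weight matching on G is pointed, i.e. it has a unique half-integral optimum x* whose weight exceeds that of every other half-integral feasible point by some ε > 0. Let (α, m, γ) be a fixed point of the natural dynamics. Then no non-solid edge (edge with x*_e = 0) is a dotted edge: every edge (i,j) with x*_{ij} = 0 satisfies w_{ij} − α_{i→j} − α_{j→i} < 0. -/
open Finset Filter Topology

/-- The offer `m_{i→j}` computed from message vector `α`:
`m_{i→j} = (w_{ij} − α_{i→j})₊ − (1/2)(w_{ij} − α_{i→j} − α_{j→i})₊`. -/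
noncomputable def offer {V : Type*} (w α : V → V → ℝ) (i j : V) : ℝ :=
  max (w i j - α i j) 0 - (1 / 2) * max (w i j - α i j - α j i) 0

/-- `max_{k ∈ ∂i ∖ {j}} m_{k→i}` (max over the empty set is 0). -/
noncomputable def bestAlt {V : Type*} [Fintype V] [DecidableEq V]
    (Adj : V → V → Prop) [DecidableRel Adj] (w α : V → V → ℝ) (i j : V) : ℝ :=
  (Finset.univ.filter fun k => Adj i k ∧ k ≠ j).fold max 0 fun k => offer w α k i

/-- Earnings `γ_i = max_{k ∈ ∂i} m_{k→i}` (max over the empty set is 0). -/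
noncomputable def earn {V : Type*} [Fintype V]
    (Adj : V → V → Prop) [DecidableRel Adj] (w α : V → V → ℝ) (i : V) : ℝ :=
  (Finset.univ.filter fun k => Adj i k).fold max 0 fun k => offer w α k i

/-- One step of the natural dynamics with damping factor `κ`:
`α'_{i→j} = κ · max_{k∈∂i∖{j}} m_{k→i} + (1−κ) · α_{i→j}`. -/
noncomputable def step {V : Type*} [Fintype V] [DecidableEq V]
    (Adj : V → V → Prop) [DecidableRel Adj] (w : V → V → ℝ) (κ : ℝ)
    (α : V → V → ℝ) : V → V → ℝ :=
  fun i j => κ * bestAlt Adj w α i j + (1 - κ) * α i j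

/-- A fixed point of the natural dynamics: the message vector is unchanged by the update. -/
def IsFixedPoint {V : Type*} [Fintype V] [DecidableEq V]
    (Adj : V → V → Prop) [DecidableRel Adj] (w : V → V → ℝ) (κ : ℝ)
    (α : V → V → ℝ) : Prop :=
  ∀ i j, Adj i j → step Adj w κ α i j = α i j

/-- `W`, the maximum edge weight. -/
noncomputable def maxW {V : Type*} [Fintype V]
    (Adj : V → V → Prop) [DecidableRel Adj] (w : V → V → ℝ) : ℝ :=
  ((Finset.univ ×ˢ Finset.univ).filter fun p : V × V => Adj p.1 p.2).fold max 0
    fun p => w p.1 p.2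

/-- A valid message vector: `α ∈ [0, W]^{2|E|}`. -/
def ValidMsg {V : Type*} [Fintype V]
    (Adj : V → V → Prop) [DecidableRel Adj] (w : V → V → ℝ) (α : V → V → ℝ) : Prop :=
  ∀ i j, Adj i j → α i j ∈ Set.Icc (0 : ℝ) (maxW Adj w)

/-- `G = (V, E)` is a finite simple graph with symmetric positive edge weights. -/
def GoodGraph {V : Type*} (Adj : V → V → Prop) (w : V → V → ℝ) : Prop :=
  (∀ i j, Adj i j → Adj j i) ∧ (∀ i, ¬Adj i i) ∧ (∀ i j, w i j = w j i) ∧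
  (∀ i j, Adj i j → 0 < w i j)

/-- Feasibility for the LP relaxation of maximum weight matching:
`x` symmetric, `x_{ij} ≥ 0` on edges, and `∑_{j∈∂i} x_{ij} ≤ 1` at every node. -/
def LPFeasible {V : Type*} [Fintype V]
    (Adj : V → V → Prop) [DecidableRel Adj] (x : V → V → ℝ) : Prop :=
  (∀ i j, x i j = x j i) ∧ (∀ i j, Adj i j → 0 ≤ x i j) ∧
  (∀ i, ∑ j ∈ Finset.univ.filter (fun j => Adj i j), x i j ≤ 1)

/-- The LP objective `∑_{(i,j)∈E} w_{ij} x_{ij}` (each undirected edge counted once,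
i.e. half the sum over ordered pairs). -/
noncomputable def LPobj {V : Type*} [Fintype V]
    (Adj : V → V → Prop) [DecidableRel Adj] (w x : V → V → ℝ) : ℝ :=
  (1 / 2) * ∑ p ∈ (Finset.univ ×ˢ Finset.univ).filter (fun p : V × V => Adj p.1 p.2),
    w p.1 p.2 * x p.1 p.2

/-- LP-type duality for the symmetric assignment problem. -/
theorem dual_exists {V : Type*} [Fintype V] [DecidableEq V] (W : V → V → ℝ)
    (hs : ∀ i j, W i j = W j i) (hd : ∀ i, W i i = 0) :
    ∃ y : V → ℝ, (∀ i j, W i j ≤ y i + y j) ∧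
      ∃ σ : Equiv.Perm V, ∀ i, y i + y (σ i) = W i (σ i) := by
  classical
  obtain ⟨M, hM⟩ : ∃ M : ℝ, ∀ i j, W i j ≤ M := by
    obtain ⟨M, hM⟩ := (Set.finite_range (fun p : V × V => W p.1 p.2)).bddAbove
    exact ⟨M, fun i j => hM ⟨(i, j), rfl⟩⟩
  let y0 : V → ℝ := fun _ => |M|
  have hy0 : ∀ i j, W i j ≤ y0 i + y0 j := fun i j => by
    have := hM i j
    have h1 := le_abs_self M
    have h2 := abs_nonneg M
    simp only [y0]; linarith
  let K : Set (V → ℝ) := {y | (∀ i j, W i j ≤ y i + y j) ∧ ∑ i, y i ≤ ∑ i, y0 i}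
  have nn : ∀ y : V → ℝ, (∀ i j, W i j ≤ y i + y j) → ∀ i, 0 ≤ y i := fun y hy i => by
    have := hy i i
    rw [hd] at this; linarith
  have hKc : IsCompact K := by
    have hcl : IsClosed K := by
      have h1 : IsClosed {y : V → ℝ | ∀ i j, W i j ≤ y i + y j} := by
        simp only [Set.ofPred_forall]
        refine isClosed_iInter fun i => isClosed_iInter fun j => ?_
        exact isClosed_le (by fun_prop) (by fun_prop)
      have h2 : IsClosed {y : V → ℝ | ∑ i, y i ≤ ∑ i, y0 i} :=
        isClosed_le (by fun_prop) (by fun_prop)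
      exact h1.inter h2
    refine IsCompact.of_isClosed_subset
      (isCompact_Icc (a := (fun _ => 0 : V → ℝ)) (b := fun _ => ∑ i, y0 i)) hcl ?_
    rintro y ⟨hy, hyS⟩
    refine ⟨fun i => nn y hy i, fun i => le_trans ?_ hyS⟩
    exact Finset.single_le_sum (f := y) (fun k _ => nn y hy k) (Finset.mem_univ i)
  obtain ⟨y, ⟨hy, hyS⟩, hmin⟩ := hKc.exists_isMinOn ⟨y0, hy0, le_refl _⟩
    (f := fun y : V → ℝ => ∑ i, y i) (by fun_prop)
  have hmin' : ∀ z : V → ℝ, (∀ i j, W i j ≤ z i + z j) → ∑ i, y i ≤ ∑ i, z i := by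
    intro z hz
    by_cases h : ∑ i, z i ≤ ∑ i, y0 i
    · exact hmin ⟨hz, h⟩
    · linarith
  refine ⟨y, hy, ?_⟩
  let t : V → Finset V := fun i => Finset.univ.filter fun j => y i + y j = W i j
  have hall : ∀ S : Finset V, S.card ≤ (S.biUnion t).card := by
    intro S
    by_contra hlt
    push Not at hlt
    set N := S.biUnion t with hN
    -- minimal slack
    obtain ⟨η, hη, hsl⟩ : ∃ η : ℝ, 0 < η ∧ ∀ i j, y i + y j ≠ W i j → W i j + η ≤ y i + y j := by
      let P := (Finset.univ : Finset (V × V)).filter fun p => y p.1 + y p.2 ≠ W p.1 p.2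
      by_cases hP : P.Nonempty
      · obtain ⟨p, hp, hpm⟩ := P.exists_min_image (fun p => y p.1 + y p.2 - W p.1 p.2) hP
        refine ⟨y p.1 + y p.2 - W p.1 p.2, ?_, ?_⟩
        · have := (Finset.mem_filter.1 hp).2
          have h2 := lt_of_le_of_ne (hy p.1 p.2) (Ne.symm this)
          linarith
        · intro i j hij
          have := hpm (i, j) (Finset.mem_filter.2 ⟨Finset.mem_univ _, hij⟩)
          simp only at this
          linarith
      · refine ⟨1, one_pos, fun i j hij => ?_⟩
        exact absurd ⟨(i, j), Finset.mem_filter.2 ⟨Finset.mem_univ _, hij⟩⟩ hP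
    let z : V → ℝ := fun i => y i + (η / 2) * ((if i ∈ N then 1 else 0) - (if i ∈ S then 1 else 0))
    have hz : ∀ i j, W i j ≤ z i + z j := by
      intro i j
      have key : ∀ i j, i ∈ S → j ∉ N → W i j + η ≤ y i + y j := by
        intro i j hi hj
        apply hsl
        intro h
        exact hj (Finset.mem_biUnion.2 ⟨i, hi, Finset.mem_filter.2 ⟨Finset.mem_univ _, h⟩⟩)
      have k1 := key i j
      have k2 := key j i
      rw [hs j i] at k2
      have k3 := hy i j
      simp only [z]
      by_cases a1 : i ∈ S <;> by_cases a2 : j ∈ S <;> by_cases a3 : i ∈ N <;>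
        by_cases a4 : j ∈ N <;> simp [a1, a2, a3, a4] at k1 k2 ⊢ <;> linarith
    have h1 := hmin' z hz
    have h2 : ∑ i, z i = ∑ i, y i + (η / 2) * ((N.card : ℝ) - S.card) := by
      simp only [z, Finset.sum_add_distrib, ← Finset.mul_sum, Finset.sum_sub_distrib]
      simp
    have h3 : (N.card : ℝ) + 1 ≤ S.card := by exact_mod_cast hlt
    nlinarith
  obtain ⟨f, hf, hft⟩ := (Finset.all_card_le_biUnion_card_iff_exists_injective t).1 hall
  refine ⟨Equiv.ofBijective f (Finite.injective_iff_bijective.1 hf), fun i => ?_⟩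
  have := hft i
  exact (Finset.mem_filter.1 this).2

/-- The half-integral point associated with a permutation. -/
noncomputable def permPt {V : Type*} [DecidableEq V] (τ : Equiv.Perm V) (i j : V) : ℝ :=
  ((if τ i = j then 1 else 0) + (if τ j = i then 1 else 0)) / 2

theorem permPt_half {V : Type*} [DecidableEq V] (τ : Equiv.Perm V) (i j : V) :
    permPt τ i j = 0 ∨ permPt τ i j = 1 / 2 ∨ permPt τ i j = 1 := by
  unfold permPt
  by_cases h1 : τ i = j <;> by_cases h2 : τ j = i <;> simp [h1, h2]

theorem permPt_nonneg {V : Type*} [DecidableEq V] (τ : Equiv.Perm V) (i j : V) :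
    0 ≤ permPt τ i j := by
  rcases permPt_half τ i j with h | h | h <;> rw [h] <;> norm_num

theorem permPt_symm {V : Type*} [DecidableEq V] (τ : Equiv.Perm V) (i j : V) :
    permPt τ i j = permPt τ j i := by
  unfold permPt; rw [add_comm]

theorem permPt_rowsum {V : Type*} [Fintype V] [DecidableEq V] (τ : Equiv.Perm V) (i : V) :
    ∑ j, permPt τ i j = 1 := by
  unfold permPt
  rw [← Finset.sum_div, Finset.sum_add_distrib]
  have : ∀ j, (if τ j = i then (1 : ℝ) else 0) = if j = τ.symm i then 1 else 0 := by
    intro j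
    simp [Equiv.eq_symm_apply]
  simp only [this]
  simp

theorem permPt_feas {V : Type*} [Fintype V] [DecidableEq V]
    (Adj : V → V → Prop) [DecidableRel Adj] (τ : Equiv.Perm V) :
    LPFeasible Adj (permPt τ) := by
  refine ⟨permPt_symm τ, fun i j _ => permPt_nonneg τ i j, fun i => ?_⟩
  rw [← permPt_rowsum τ i]
  exact Finset.sum_le_sum_of_subset_of_nonneg (Finset.subset_univ _)
    fun j _ _ => permPt_nonneg τ i j

theorem LPobj_eq {V : Type*} [Fintype V]
    (Adj : V → V → Prop) [DecidableRel Adj] (w x : V → V → ℝ) :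
    LPobj Adj w x = (1 / 2) * ∑ i, ∑ j, (if Adj i j then w i j else 0) * x i j := by
  unfold LPobj
  rw [Finset.sum_filter, Finset.sum_product]
  congr 1
  refine Finset.sum_congr rfl fun i _ => Finset.sum_congr rfl fun j _ => ?_
  by_cases h : Adj i j <;> simp [h]

theorem sum_permPt {V : Type*} [Fintype V] [DecidableEq V] (W : V → V → ℝ)
    (hs : ∀ i j, W i j = W j i) (τ : Equiv.Perm V) :
    ∑ i, ∑ j, W i j * permPt τ i j = ∑ i, W i (τ i) := by
  have h1 : ∑ i, ∑ j, W i j * (if τ i = j then (1 : ℝ) else 0) = ∑ i, W i (τ i) := by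
    simp
  have h2 : ∑ i, ∑ j, W i j * (if τ j = i then (1 : ℝ) else 0) = ∑ i, W i (τ i) := by
    rw [Finset.sum_comm, ← h1]
    refine Finset.sum_congr rfl fun i _ => Finset.sum_congr rfl fun j _ => ?_
    rw [hs]
  have : ∀ i j, W i j * permPt τ i j = (W i j * (if τ i = j then (1 : ℝ) else 0)
      + W i j * (if τ j = i then (1 : ℝ) else 0)) / 2 := by
    intro i j; unfold permPt; ring
  simp only [this, ← Finset.sum_div, Finset.sum_add_distrib, h1, h2]
  ring

section fp
variable {V : Type*} [Fintype V] [DecidableEq V]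
    {Adj : V → V → Prop} [DecidableRel Adj] {w : V → V → ℝ} {α : V → V → ℝ}

theorem fold_max_ge {s : Finset V} {f : V → ℝ} {k : V} (hk : k ∈ s) : f k ≤ s.fold max 0 f :=
  (Finset.le_fold_max _).2 (Or.inr ⟨k, hk, le_refl _⟩)

theorem fold_max_nonneg {s : Finset V} {f : V → ℝ} : 0 ≤ s.fold max 0 f :=
  (Finset.le_fold_max _).2 (Or.inl (le_refl _))

theorem fold_max_att {s : Finset V} {f : V → ℝ} (h : 0 < s.fold max 0 f) :
    ∃ k ∈ s, f k = s.fold max 0 f := by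
  rcases (Finset.le_fold_max _).1 (le_refl (s.fold max 0 f)) with h1 | ⟨k, hk, h1⟩
  · linarith
  · exact ⟨k, hk, le_antisymm (fold_max_ge hk) h1⟩

theorem earn_split {i j : V} (h : Adj i j) :
    earn Adj w α i = max (bestAlt Adj w α i j) (offer w α j i) := by
  apply le_antisymm
  · unfold earn
    rw [Finset.fold_max_le]
    refine ⟨le_max_of_le_left fold_max_nonneg, fun k hk => ?_⟩
    have hk := (Finset.mem_filter.1 hk).2
    by_cases hkj : k = j
    · subst hkj; exact le_max_right _ _
    · apply le_max_of_le_left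
      exact fold_max_ge (f := fun k => offer w α k i) (by simp [hk, hkj])
  · apply max_le
    · unfold bestAlt
      rw [Finset.fold_max_le]
      refine ⟨fold_max_nonneg, fun k hk => ?_⟩
      exact fold_max_ge (f := fun k => offer w α k i)
        (Finset.mem_filter.2 ⟨Finset.mem_univ _, ((Finset.mem_filter.1 hk).2).1⟩)
    · exact fold_max_ge (f := fun k => offer w α k i)
        (Finset.mem_filter.2 ⟨Finset.mem_univ _, h⟩)

theorem edge_cases (hG : GoodGraph Adj w) (hnn : ∀ i j, Adj i j → 0 ≤ α i j)
    (hb : ∀ i j, Adj i j → bestAlt Adj w α i j = α i j) {i j : V} (h : Adj i j) :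
    (0 ≤ w i j - α i j - α j i ∧ offer w α j i = earn Adj w α i ∧
      earn Adj w α i = α i j + (w i j - α i j - α j i) / 2) ∨
    (w i j - α i j - α j i < 0 ∧ earn Adj w α i = α i j ∧
      (offer w α j i = α i j → α i j = 0)) := by
  have hji := hG.1 i j h
  have e := earn_split (w := w) (α := α) h
  rw [hb i j h] at e
  have a1 := hnn i j h
  have a2 := hnn j i hji
  have hw := hG.2.2.1 i j
  have ho : offer w α j i = max (w i j - α j i) 0
      - (1 / 2) * max (w i j - α i j - α j i) 0 := by
    unfold offer; rw [← hw]; ring_nf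
  rcases le_or_gt 0 (w i j - α i j - α j i) with hs | hs
  · left
    rw [max_eq_left hs, max_eq_left (by linarith)] at ho
    have : α i j ≤ offer w α j i := by rw [ho]; linarith
    rw [max_eq_right this] at e
    refine ⟨hs, e.symm, ?_⟩
    rw [e, ho]; ring
  · right
    rw [max_eq_right hs.le] at ho
    refine ⟨hs, ?_, ?_⟩
    · rw [e]; apply max_eq_left
      rw [ho]
      have : max (w i j - α j i) 0 ≤ α i j := max_le (by linarith) a1
      linarith
    · intro h0
      rw [h0] at ho
      rcases le_total (w i j - α j i) 0 with h1 | h1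
      · rw [max_eq_right h1] at ho; linarith
      · rw [max_eq_left h1] at ho; linarith

variable (hG : GoodGraph Adj w) (hnn : ∀ i j, Adj i j → 0 ≤ α i j)
    (hb : ∀ i j, Adj i j → bestAlt Adj w α i j = α i j)

theorem earn_cases (hG : GoodGraph Adj w) (hnn : ∀ i j, Adj i j → 0 ≤ α i j)
    (hb : ∀ i j, Adj i j → bestAlt Adj w α i j = α i j) {i j : V} (h : Adj i j) :
    (0 ≤ w i j - α i j - α j i ∧ earn Adj w α i + earn Adj w α j = w i j) ∨
    (w i j - α i j - α j i < 0 ∧ w i j < earn Adj w α i + earn Adj w α j) := by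
  have hji := hG.1 i j h
  have hw := hG.2.2.1 i j
  rcases edge_cases hG hnn hb h with ⟨a, _, c⟩ | ⟨a, b, _⟩ <;>
  rcases edge_cases hG hnn hb hji with ⟨a', _, c'⟩ | ⟨a', b', _⟩
  · left; exact ⟨a, by linarith⟩
  · linarith
  · linarith
  · right; exact ⟨a, by linarith⟩

theorem offer_dotted (hG : GoodGraph Adj w) (hnn : ∀ i j, Adj i j → 0 ≤ α i j)
    (hb : ∀ i j, Adj i j → bestAlt Adj w α i j = α i j) {i k : V} (h : Adj i k)
    (hpos : 0 < earn Adj w α i) (ho : offer w α k i = earn Adj w α i) :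
    earn Adj w α i + earn Adj w α k = w i k := by
  rcases earn_cases hG hnn hb h with ⟨_, c⟩ | ⟨a, _⟩
  · exact c
  · rcases edge_cases hG hnn hb h with ⟨a', _⟩ | ⟨_, b', c'⟩
    · linarith
    · have := c' (by rw [ho, b'])
      linarith

theorem other_dotted (hG : GoodGraph Adj w) (hnn : ∀ i j, Adj i j → 0 ≤ α i j)
    (hb : ∀ i j, Adj i j → bestAlt Adj w α i j = α i j) {a b c : V} (hab : Adj a b)
    (hpos : 0 < earn Adj w α b) (hac : Adj a c) (hcb : c ≠ b)
    (hd : earn Adj w α a + earn Adj w α c = w a c) :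
    ∃ k, k ≠ a ∧ Adj b k ∧ earn Adj w α b + earn Adj w α k = w b k := by
  have hba := hG.1 a b hab
  have hw := hG.2.2.1 a b
  rcases earn_cases hG hnn hb hab with ⟨s0, e0⟩ | ⟨_, hlt⟩
  · -- dotted, hence weak
    rcases edge_cases hG hnn hb hab with ⟨_, _, e1⟩ | ⟨h', _⟩
    swap
    · linarith
    have h1 : earn Adj w α a ≤ α a b := by
      rcases edge_cases hG hnn hb hac with ⟨_, h2, _⟩ | ⟨h', _⟩
      · rw [← h2, ← hb a b hab]
        exact fold_max_ge (f := fun k => offer w α k a) (by simp [hac, hcb])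
      · rcases earn_cases hG hnn hb hac with ⟨_, _⟩ | ⟨_, _⟩ <;> linarith
    have e2 : earn Adj w α b = α b a := by
      rcases edge_cases hG hnn hb hba with ⟨_, _, e3⟩ | ⟨_, e3, _⟩ <;> linarith
    have hB : bestAlt Adj w α b a = earn Adj w α b := by rw [hb b a hba, e2]
    obtain ⟨k, hk, hk2⟩ := fold_max_att (s := Finset.univ.filter fun k => Adj b k ∧ k ≠ a)
      (f := fun k => offer w α k b) (by rw [← hB] at hpos; exact hpos)
    have hk := (Finset.mem_filter.1 hk).2
    exact ⟨k, hk.2, hk.1, offer_dotted hG hnn hb hk.1 hpos (hk2.trans hB)⟩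
  · obtain ⟨k, hk, hk2⟩ := fold_max_att (s := Finset.univ.filter fun k => Adj b k)
      (f := fun k => offer w α k b) hpos
    have hk := (Finset.mem_filter.1 hk).2
    have hd' := offer_dotted hG hnn hb hk hpos hk2
    refine ⟨k, ?_, hk, hd'⟩
    rintro rfl
    linarith

end fp

/-- An even alternating cycle in the support of `σ` contradicts uniqueness. -/
theorem even_cycle {V : Type*} [Fintype V] [DecidableEq V] (W : V → V → ℝ)
    (hs : ∀ i j, W i j = W j i) (σ : Equiv.Perm V) (SA : Finset V)
    (hcl : ∀ k ∈ SA, σ (σ k) ∈ SA) (hdis : ∀ k ∈ SA, σ k ∉ SA)  :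
    ∃ τ₁ τ₂ : Equiv.Perm V, (∑ i, W i (τ₁ i)) + (∑ i, W i (τ₂ i)) = 2 * ∑ i, W i (σ i) ∧
      ∀ k ∈ SA, τ₁ k = σ k ∧ τ₁ (σ k) = k ∧ τ₂ (σ k) = σ (σ k) ∧ τ₂ (σ (σ k)) = σ k := by
  classical
  have hsurj : ∀ k ∈ SA, ∃ t ∈ SA, σ (σ t) = k := by
    have : SA.image (fun k => σ (σ k)) = SA := by
      apply Finset.eq_of_subset_of_card_le
      · intro x hx
        obtain ⟨k, hk, rfl⟩ := Finset.mem_image.1 hx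
        exact hcl k hk
      · exact (Finset.card_image_of_injective SA (σ.injective.comp σ.injective)).ge
    intro k hk
    rw [← this] at hk
    obtain ⟨t, ht, h⟩ := Finset.mem_image.1 hk
    exact ⟨t, ht, h⟩
  -- membership in SB is `σ.symm k ∈ SA`
  have hB : ∀ k, σ k ∈ SA → σ.symm k ∈ SA := by
    intro k hk
    obtain ⟨t, ht, h⟩ := hsurj _ hk
    have : σ t = k := σ.injective h
    rw [← this]; simpa using ht
  let f1 : V → V := fun k => if σ.symm k ∈ SA then σ.symm k else σ k
  let f2 : V → V := fun k => if k ∈ SA then σ.symm k else σ k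
  have i1 : Function.Injective f1 := by
    intro k l h
    simp only [f1] at h
    split_ifs at h with h1 h2 h2
    · exact σ.symm.injective h
    · rw [h] at h1; exact absurd (hB _ h1) h2
    · rw [← h] at h2; exact absurd (hB _ h2) h1
    · exact σ.injective h
  have aux : ∀ k l, k ∈ SA → σ.symm k = σ l → l ∈ SA := by
    intro k l hk h
    obtain ⟨t, ht, h'⟩ := hsurj _ hk
    rw [← h'] at h
    have : σ t = σ l := by simpa using h
    rw [← σ.injective this]; exact ht
  have i2 : Function.Injective f2 := by
    intro k l h
    simp only [f2] at h
    split_ifs at h with h1 h2 h2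
    · exact σ.symm.injective h
    · exact absurd (aux _ _ h1 h) h2
    · exact absurd (aux _ _ h2 h.symm) h1
    · exact σ.injective h
  refine ⟨Equiv.ofBijective f1 (Finite.injective_iff_bijective.1 i1),
    Equiv.ofBijective f2 (Finite.injective_iff_bijective.1 i2), ?_, ?_⟩
  · simp only [Equiv.ofBijective_apply]
    let S : V → Prop := fun k => k ∈ SA ∨ σ.symm k ∈ SA
    have hS : ∀ k, S (σ.symm k) ↔ S k := by
      intro k
      constructor
      · rintro (h | h)
        · exact Or.inr h
        · left; simpa using hcl _ h
      · rintro (h | h)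
        · obtain ⟨t, ht, h'⟩ := hsurj _ h
          right; rw [← h']; simpa using ht
        · exact Or.inl h
    have ht : ∀ k, W k (f1 k) + W k (f2 k) =
        W k (σ k) + ((if S (σ.symm k) then W (σ.symm k) (σ (σ.symm k)) else 0)
          + (W k (σ k) - if S k then W k (σ k) else 0)) := by
      intro k
      rw [if_congr (hS k) rfl rfl]
      simp only [f1, f2, S, Equiv.apply_symm_apply]
      rw [hs (σ.symm k) k]
      by_cases h1 : k ∈ SA <;> by_cases h2 : σ.symm k ∈ SA
      · have := hdis _ h2
        simp at this; exact absurd h1 this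
      · simp [h1, h2]
      · simp [h1, h2]; ring
      · simp [h1, h2]
    rw [← Finset.sum_add_distrib]
    simp only [ht]
    rw [Finset.sum_add_distrib, Finset.sum_add_distrib, Finset.sum_sub_distrib,
      Equiv.sum_comp σ.symm (fun k => if S k then W k (σ k) else 0)]
    ring
  · intro k hk
    simp only [Equiv.ofBijective_apply, f1, f2]
    have h1 := hdis k hk
    have h2 := hcl k hk
    have h3 : σ.symm k ∉ SA := by
      intro h; have := hdis _ h; simp at this; exact this hk
    simp [h1, h2, h3, hk]

/-- If the LP relaxation is pointed (unique half-integral optimum `x*` with an `ε` weight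
gap over all other half-integral feasible points), then at any fixed point of the natural
dynamics no non-solid edge (`x*_e = 0`) is dotted: `w_{ij} − α_{i→j} − α_{j→i} < 0`. -/
theorem stmt14 {V : Type*} [Fintype V] [DecidableEq V]
    (Adj : V → V → Prop) [DecidableRel Adj] (w : V → V → ℝ)
    (hG : GoodGraph Adj w) (κ : ℝ) (hκ : κ ∈ Set.Ioo (0 : ℝ) 1)
    (xstar : V → V → ℝ) (hfeas : LPFeasible Adj xstar)
    (hhalf : ∀ i j, Adj i j → xstar i j = 0 ∨ xstar i j = 1 / 2 ∨ xstar i j = 1)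
    (ε : ℝ) (hε : 0 < ε)
    (hopt : ∀ x, LPFeasible Adj x → LPobj Adj w x ≤ LPobj Adj w xstar)
    (hgap : ∀ x, LPFeasible Adj x →
      (∀ i j, Adj i j → x i j = 0 ∨ x i j = 1 / 2 ∨ x i j = 1) →
      (∃ i j, Adj i j ∧ x i j ≠ xstar i j) →
      LPobj Adj w x + ε ≤ LPobj Adj w xstar)
    (α : V → V → ℝ) (hnn : ∀ i j, Adj i j → 0 ≤ α i j)
    (hfp : IsFixedPoint Adj w κ α) :
    ∀ i j, Adj i j → xstar i j = 0 → w i j - α i j - α j i < 0 := by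
  classical
  intro i₀ j₀ hij₀ hx₀
  by_contra hneg
  push Not at hneg
  have hb : ∀ i j, Adj i j → bestAlt Adj w α i j = α i j := by
    intro i j h
    have h1 := hfp i j h
    unfold step at h1
    have h2 : κ * (bestAlt Adj w α i j - α i j) = 0 := by linarith
    rcases mul_eq_zero.1 h2 with h3 | h3
    · exact absurd h3 hκ.1.ne'
    · linarith
  have hsy := hG.1
  have hir := hG.2.1
  have hws := hG.2.2.1
  have hwp := hG.2.2.2
  have hxs := hfeas.1
  set γ : V → ℝ := earn Adj w α with hγ
  have hγ0 : ∀ i, 0 ≤ γ i := fun i => fold_max_nonneg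
  have hdual : ∀ i j, Adj i j → w i j ≤ γ i + γ j := by
    intro i j h
    rcases earn_cases hG hnn hb h with ⟨_, c⟩ | ⟨_, c⟩
    · exact c.ge
    · exact c.le
  have hD₀ : γ i₀ + γ j₀ = w i₀ j₀ := by
    rcases earn_cases hG hnn hb hij₀ with ⟨_, c⟩ | ⟨a, _⟩
    · exact c
    · linarith
  -- perturbation size
  obtain ⟨η, hη, hηε⟩ : ∃ η : ℝ, 0 < η ∧ η * (Fintype.card V : ℝ) < ε := by
    refine ⟨ε / (Fintype.card V + 1), by positivity, ?_⟩
    rw [div_mul_eq_mul_div, div_lt_iff₀ (by positivity)]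
    nlinarith
  let w1 : V → V → ℝ := fun i j => if Adj i j then w i j else 0
  let w2 : V → V → ℝ := fun i j =>
    if Adj i j then w i j + (if xstar i j = 0 then η else 0) else 0
  have adj_iff : ∀ i j, Adj i j ↔ Adj j i := fun i j => ⟨hsy i j, hsy j i⟩
  have hw1s : ∀ i j, w1 i j = w1 j i := by
    intro i j; simp only [w1, adj_iff i j, hws i j]
  have hw2s : ∀ i j, w2 i j = w2 j i := by
    intro i j; simp only [w2, adj_iff i j, hws i j, hxs i j]
  obtain ⟨y, hy, σ, hσ⟩ := dual_exists w2 hw2s (fun i => by simp [w2, hir i])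
  have hy0 : ∀ i, 0 ≤ y i := fun i => by
    have := hy i i
    simp only [w2, hir i, if_false] at this; linarith
  have hobj : ∀ τ : Equiv.Perm V, LPobj Adj w (permPt τ) = (1 / 2) * ∑ i, w1 i (τ i) := by
    intro τ; rw [LPobj_eq, ← sum_permPt w1 hw1s τ]
  -- the permutation realises xstar
  have hweak : LPobj Adj w xstar ≤ ∑ i, y i := by
    let X : V → V → ℝ := fun i j => if Adj i j then xstar i j else 0
    have hXs : ∀ i j, X i j = X j i := by
      intro i j; simp only [X, adj_iff i j, hxs i j]
    have hX0 : ∀ i j, 0 ≤ X i j := by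
      intro i j; simp only [X]; split_ifs with h
      · exact hfeas.2.1 i j h
      · exact le_refl _
    have hXr : ∀ i, ∑ j, X i j ≤ 1 := by
      intro i; have := hfeas.2.2 i; rw [Finset.sum_filter] at this; exact this
    have h1 : ∀ i j, (if Adj i j then w i j else 0) * xstar i j ≤ y i * X i j + y j * X i j := by
      intro i j
      by_cases h : Adj i j
      · have h2 := hy i j
        have h3 := hX0 i j
        simp only [X, h, if_true, w2] at h2 h3 ⊢
        have : w i j ≤ y i + y j := by
          split_ifs at h2 <;> linarith
        nlinarith
      · simp [X, h]
    rw [LPobj_eq]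
    have h2 : ∑ i, ∑ j, y i * X i j ≤ ∑ i, y i := by
      refine Finset.sum_le_sum fun i _ => ?_
      rw [← Finset.mul_sum]
      have := hXr i
      have := hy0 i
      nlinarith
    have h3 : ∑ i, ∑ j, y j * X i j = ∑ i, ∑ j, y i * X i j := by
      rw [Finset.sum_comm]
      refine Finset.sum_congr rfl fun i _ => Finset.sum_congr rfl fun j _ => ?_
      rw [hXs]
    have h4 : ∑ i, ∑ j, (if Adj i j then w i j else 0) * xstar i j
        ≤ ∑ i, ∑ j, (y i * X i j + y j * X i j) :=
      Finset.sum_le_sum fun i _ => Finset.sum_le_sum fun j _ => h1 i j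
    simp only [Finset.sum_add_distrib, h3] at h4
    linarith
  have hreal : ∀ i j, Adj i j → permPt σ i j = xstar i j := by
    by_contra hne
    push Not at hne
    have h1 := hgap _ (permPt_feas Adj σ) (fun i j _ => permPt_half σ i j) hne
    rw [hobj] at h1
    have h2 : ∑ i, w2 i (σ i) = 2 * ∑ i, y i := by
      simp only [← hσ]
      rw [Finset.sum_add_distrib, Equiv.sum_comp σ y]; ring
    have h3 : ∑ i, w2 i (σ i) ≤ ∑ i, (w1 i (σ i) + η) := by
      refine Finset.sum_le_sum fun i _ => ?_
      simp only [w1, w2]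
      split_ifs <;> linarith
    rw [Finset.sum_add_distrib] at h3
    simp only [Finset.sum_const, Finset.card_univ, nsmul_eq_mul] at h3
    nlinarith
  have hsolid : ∀ i, Adj i (σ i) → xstar i (σ i) ≠ 0 := by
    intro i h
    rw [← hreal i _ h]
    unfold permPt
    simp only [if_true]
    split_ifs <;> norm_num
  -- the extremal bad endpoint
  let T : Finset V := Finset.univ.filter fun a => γ a < y a ∧
    ∃ c, Adj a c ∧ γ a + γ c = w a c ∧ xstar a c = 0
  have hT : T.Nonempty := by
    have h1 := hy i₀ j₀
    simp only [w2, hij₀, hx₀, if_true] at h1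
    rcases lt_or_ge (γ i₀) (y i₀) with h | h
    · exact ⟨i₀, Finset.mem_filter.2 ⟨Finset.mem_univ _, h, j₀, hij₀, hD₀, hx₀⟩⟩
    · refine ⟨j₀, Finset.mem_filter.2 ⟨Finset.mem_univ _, by linarith, i₀, hsy _ _ hij₀, ?_, ?_⟩⟩
      · rw [← hws]; linarith
      · rw [← hxs]; exact hx₀
  obtain ⟨a, haT, hamax⟩ := T.exists_max_image (fun k => y k - γ k) hT
  obtain ⟨ha1, c, hac, hacD, hacx⟩ := (Finset.mem_filter.1 haT).2
  let P : V → Prop := fun k => γ k < y k ∧ y a - γ a ≤ y k - γ k ∧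
    ∃ c, Adj k c ∧ γ k + γ c = w k c ∧ c ≠ σ k
  have hPa : P a := by
    refine ⟨ha1, le_refl _, c, hac, hacD, ?_⟩
    rintro rfl
    exact hsolid a hac hacx
  have hstep : ∀ k, P k → P (σ (σ k)) ∧ y (σ k) < γ (σ k) ∧ σ (σ k) ≠ k ∧ Adj k (σ k) ∧
      Adj (σ k) (σ (σ k)) := by
    rintro k ⟨h1, h2, c, hkc, hD, hc⟩
    have e1 := hσ k
    have hadj : Adj k (σ k) := by
      by_contra h
      simp only [w2, h, if_false] at e1
      have := hγ0 k
      have := hy0 (σ k)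
      linarith
    simp only [w2, hadj, hsolid k hadj, if_true, if_false] at e1
    have e2 := hdual k (σ k) hadj
    have hBlt : y (σ k) < γ (σ k) := by linarith
    have hpos : 0 < γ (σ k) := lt_of_le_of_lt (hy0 _) hBlt
    obtain ⟨a', ha', hba', hD'⟩ := other_dotted hG hnn hb hadj hpos hkc hc hD
    have e3 := hy (σ k) a'
    change γ (σ k) + γ a' = w (σ k) a' at hD'
    have hnz : xstar (σ k) a' ≠ 0 := by
      intro hz
      simp only [w2, hba', hz, if_true] at e3
      have hm := hamax a' (Finset.mem_filter.2 ⟨Finset.mem_univ _, by linarith, σ k,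
        hsy _ _ hba', by rw [← hws]; linarith, by rw [← hxs]; exact hz⟩)
      linarith
    simp only [w2, hba', hnz, if_true, if_false] at e3
    have hσa : σ (σ k) = a' := by
      rw [← hreal _ _ hba'] at hnz
      by_contra h
      have h' : ¬ σ a' = σ k := fun h' => ha' (σ.injective h')
      apply hnz
      simp [permPt, h, h']
    rw [hσa]
    refine ⟨⟨by linarith, by linarith, σ k, hsy _ _ hba', by rw [← hws]; linarith, ?_⟩,
      hBlt, ha', hadj, hba'⟩
    intro h
    exact ha' (σ.injective h).symm
  obtain ⟨τ₁, τ₂, hsum, hτ⟩ := even_cycle w1 hw1s σ (Finset.univ.filter P)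
    (fun k hk => Finset.mem_filter.2 ⟨Finset.mem_univ _, (hstep k (Finset.mem_filter.1 hk).2).1⟩)
    (fun k hk hk' => by
      have h1 := (hstep k (Finset.mem_filter.1 hk).2).2.1
      have h2 := (Finset.mem_filter.1 hk').2.1
      linarith)
  obtain ⟨t1, t2, t3, t4⟩ := hτ a (Finset.mem_filter.2 ⟨Finset.mem_univ _, hPa⟩)
  obtain ⟨-, -, hne, had1, had2⟩ := hstep a hPa
  have g1 := hgap _ (permPt_feas Adj τ₁) (fun i j _ => permPt_half τ₁ i j)
    ⟨a, σ a, had1, by rw [← hreal _ _ had1]; simp [permPt, t1, t2, hne]⟩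
  have g2 := hgap _ (permPt_feas Adj τ₂) (fun i j _ => permPt_half τ₂ i j)
    ⟨σ a, σ (σ a), had2, by rw [← hreal _ _ had2]; simp [permPt, t3, t4, hne]⟩
  have hobs : LPobj Adj w xstar = (1 / 2) * ∑ i, w1 i (σ i) := by
    rw [← hobj σ, LPobj_eq, LPobj_eq]
    congr 1
    refine Finset.sum_congr rfl fun i _ => Finset.sum_congr rfl fun j _ => ?_
    by_cases h : Adj i j
    · rw [hreal i j h]
    · simp [h]
  rw [hobj] at g1 g2
  linarith
end

section
/- Suppose the LP relaxation of maximum weight matching on G is pointed, i.e. it has a unique half-integral optimum x* whose weight exceeds that of every other half-integral feasible point by some ε > 0. Let (α, m, γ) be a fixed point of the natural dynamics. Then every 1-solid edge (x*_e = 1) is strong-dotted (w_{ij} − α_{i→j} − α_{j→i} > 0), and every ½-solid edge (x*_e = 1/2) is weak-dotted (w_{ij} − α_{i→j} − α_{j→i} = 0). -/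
open Finset Filter Topology

/-- Birkhoff for doubly substochastic matrices, as a statement about linear functionals. -/
lemma birk_aux {V : Type*} [Fintype V] [DecidableEq V] (X : V → V → ℝ)
    (h0 : ∀ i j, 0 ≤ X i j) (hr : ∀ i, ∑ j, X i j ≤ 1) (hc : ∀ j, ∑ i, X i j ≤ 1)
    (c : V → V → ℝ) :
    ∃ P : V → V → ℝ, (∀ i j, P i j = 0 ∨ P i j = 1) ∧ (∀ i, ∑ j, P i j ≤ 1) ∧
      (∀ j, ∑ i, P i j ≤ 1) ∧ (∀ i j, X i j = 0 → P i j = 0) ∧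
      ∑ i, ∑ j, c i j * X i j ≤ ∑ i, ∑ j, c i j * P i j := by
  classical
  let M : Matrix (V ⊕ V) (V ⊕ V) ℝ := Matrix.fromBlocks (Matrix.of X)
    (Matrix.diagonal fun i => 1 - ∑ j, X i j) (Matrix.diagonal fun j => 1 - ∑ i, X i j)
    (Matrix.of fun i j => X j i)
  have hM : M ∈ doublyStochastic ℝ (V ⊕ V) := by
    rw [mem_doublyStochastic_iff_sum]
    refine ⟨?_, ?_, ?_⟩
    · rintro (i | i) (j | j)
      · simpa [M] using h0 i j
      · by_cases h : i = j
        · subst h; simpa [M] using hr i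
        · simp [M, h]
      · by_cases h : i = j
        · subst h; simpa [M] using hc i
        · simp [M, h]
      · simpa [M] using h0 j i
    · rintro (i | i) <;> simp [M, Matrix.diagonal_apply]
    · rintro (i | i) <;> simp [M, Matrix.diagonal_apply]
  obtain ⟨l, hl0, hl1, hl⟩ := exists_eq_sum_perm_of_mem_doublyStochastic hM
  let P : Equiv.Perm (V ⊕ V) → V → V → ℝ := fun σ i j => if σ (Sum.inl i) = Sum.inl j then 1 else 0
  have hX : ∀ i j, X i j = ∑ σ, l σ * P σ i j := by
    intro i j
    have := congrFun (congrFun hl (Sum.inl i)) (Sum.inl j)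
    simp only [Matrix.sum_apply, Matrix.smul_apply, M, Matrix.fromBlocks_apply₁₁,
      Matrix.of_apply] at this
    rw [← this]
    refine Finset.sum_congr rfl fun σ _ => ?_
    simp [P, Equiv.toPEquiv_apply, Equiv.Perm.permMatrix, PEquiv.toMatrix_apply, eq_comm]
  have hlin : ∑ i, ∑ j, c i j * X i j = ∑ σ, l σ * ∑ i, ∑ j, c i j * P σ i j := by
    simp only [hX, Finset.mul_sum]
    have h1 : ∀ i : V, ∑ j, ∑ σ, c i j * (l σ * P σ i j) =
        ∑ σ, ∑ j, c i j * (l σ * P σ i j) := fun i => Finset.sum_comm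
    simp only [h1]
    rw [Finset.sum_comm]
    refine Finset.sum_congr rfl fun σ _ => Finset.sum_congr rfl fun i _ =>
      Finset.sum_congr rfl fun j _ => ?_
    ring
  have : ∃ σ, 0 < l σ ∧ ∑ i, ∑ j, c i j * X i j ≤ ∑ i, ∑ j, c i j * P σ i j := by
    by_contra hcon
    push Not at hcon
    have hne : ∃ σ, 0 < l σ := by
      by_contra hh
      push Not at hh
      have : ∑ σ, l σ ≤ 0 := Finset.sum_nonpos fun σ _ => hh σ
      linarith
    have h1 : ∑ σ, l σ * ∑ i, ∑ j, c i j * P σ i j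
        < ∑ σ, l σ * ∑ i, ∑ j, c i j * X i j := by
      apply Finset.sum_lt_sum
      · intro σ _
        rcases (hl0 σ).eq_or_lt with h | h
        · simp [← h]
        · exact mul_le_mul_of_nonneg_left (hcon σ h).le h.le
      · obtain ⟨σ, hσ⟩ := hne
        exact ⟨σ, Finset.mem_univ _, mul_lt_mul_of_pos_left (hcon σ hσ) hσ⟩
    rw [← Finset.sum_mul, hl1, one_mul, ← hlin] at h1
    exact lt_irrefl _ h1
  obtain ⟨σ, hσ, hle⟩ := this
  refine ⟨P σ, ?_, ?_, ?_, ?_, hle⟩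
  · intro i j
    by_cases h : σ (Sum.inl i) = Sum.inl j <;> simp [P, h]
  · intro i
    have hP : ∀ a b, 0 ≤ (σ.permMatrix ℝ) a b := fun a b =>
      nonneg_of_mem_doublyStochastic permMatrix_mem_doublyStochastic
    have h1 := sum_row_of_mem_doublyStochastic
      (permMatrix_mem_doublyStochastic (R := ℝ) (σ := σ)) (Sum.inl i)
    rw [Fintype.sum_sum_type] at h1
    have h2 : 0 ≤ ∑ j, (σ.permMatrix ℝ) (Sum.inl i) (Sum.inr j) :=
      Finset.sum_nonneg fun j _ => hP _ _
    have h3 : ∑ j, P σ i j = ∑ j, (σ.permMatrix ℝ) (Sum.inl i) (Sum.inl j) := by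
      refine Finset.sum_congr rfl fun j _ => ?_
      simp [P, Equiv.toPEquiv_apply, Equiv.Perm.permMatrix, PEquiv.toMatrix_apply, eq_comm]
    linarith
  · intro i
    have hP : ∀ a b, 0 ≤ (σ.permMatrix ℝ) a b := fun a b =>
      nonneg_of_mem_doublyStochastic permMatrix_mem_doublyStochastic
    have h1 := sum_col_of_mem_doublyStochastic
      (permMatrix_mem_doublyStochastic (R := ℝ) (σ := σ)) (Sum.inl i)
    rw [Fintype.sum_sum_type] at h1
    have h2 : 0 ≤ ∑ j, (σ.permMatrix ℝ) (Sum.inr j) (Sum.inl i) :=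
      Finset.sum_nonneg fun j _ => hP _ _
    have h3 : ∑ j, P σ j i = ∑ j, (σ.permMatrix ℝ) (Sum.inl j) (Sum.inl i) := by
      refine Finset.sum_congr rfl fun j _ => ?_
      simp [P, Equiv.toPEquiv_apply, Equiv.Perm.permMatrix, PEquiv.toMatrix_apply, eq_comm]
    linarith
  · intro i j h
    rw [hX, Finset.sum_eq_zero_iff_of_nonneg] at h
    · have := h σ (Finset.mem_univ _)
      rcases mul_eq_zero.1 this with h' | h'
      · exact absurd h' hσ.ne'
      · exact h'
    · intro τ _
      refine mul_nonneg (hl0 τ) ?_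
      simp only [P]; split_ifs <;> norm_num

lemma LPobj_eq_aux {V : Type*} [Fintype V] (Adj : V → V → Prop) [DecidableRel Adj]
    (w x : V → V → ℝ) :
    LPobj Adj w x = (1 / 2) * ∑ i, ∑ j, if Adj i j then w i j * x i j else 0 := by
  unfold LPobj
  rw [Finset.sum_filter, Finset.sum_product]

lemma small_aux (b C T : ℝ) (hT : 0 < T) (hC : 0 ≤ C)
    (h : ∀ t, 0 < t → t ≤ T → 0 ≤ t * b + C * t ^ 2) : 0 ≤ b := by
  by_contra hb
  push Not at hb
  have hp : 0 < -b / (C + 1) := by apply div_pos <;> linarith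
  have h1 := h (min T (-b / (C + 1))) (lt_min hT hp) (min_le_left _ _)
  set t := min T (-b / (C + 1)) with ht
  have htp : 0 < t := lt_min hT hp
  have h2 : t ≤ -b / (C + 1) := min_le_right _ _
  rw [le_div_iff₀ (by linarith)] at h2
  have h3 : 0 ≤ t * (b + C * t) := by linarith [h1, show t * b + C * t ^ 2 = t * (b + C * t) by ring]
  have h4 := nonneg_of_mul_nonneg_right h3 htp
  nlinarith

/-- Slack of the dual constraint. -/
noncomputable def slk {V : Type*} (Adj : V → V → Prop) [DecidableRel Adj]
    (w : V → V → ℝ) (y : V → ℝ) (i j : V) : ℝ :=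
  if Adj i j then max (w i j - y i - y j) 0 else 0

lemma slk_pen {V : Type*} (Adj : V → V → Prop) [DecidableRel Adj]
    (w : V → V → ℝ) (y z : V → ℝ) (i j : V) :
    slk Adj w (y + z) i j ^ 2 ≤ slk Adj w y i j ^ 2 - 2 * (z i + z j) * slk Adj w y i j
      + (z i + z j) ^ 2 := by
  unfold slk
  split_ifs with h
  · simp only [Pi.add_apply]
    set a := w i j - y i - y j
    set τ := z i + z j
    have : w i j - (y i + z i) - (y j + z j) = a - τ := by simp only [a, τ]; ring
    rw [this]
    rcases le_total 0 a with ha | ha <;> rcases le_total 0 (a - τ) with hb | hb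
    · rw [max_eq_left ha, max_eq_left hb]; nlinarith
    · rw [max_eq_left ha, max_eq_right hb]; nlinarith [sq_nonneg (a - τ)]
    · rw [max_eq_right ha, max_eq_left hb]; nlinarith
    · rw [max_eq_right ha, max_eq_right hb]; nlinarith [sq_nonneg τ]
  · nlinarith [sq_nonneg (z i + z j)]

lemma dual_pen {V : Type*} [Fintype V] [DecidableEq V] (Adj : V → V → Prop) [DecidableRel Adj]
    (hs : ∀ i j, Adj i j → Adj j i) (w : V → V → ℝ) (hw : ∀ i j, w i j = w j i)
    (B : ℝ) (hB : ∀ x, LPFeasible Adj x → LPobj Adj w x ≤ B) (R : ℝ) (hR : 0 < R)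
    (hwR : ∀ i j, w i j ≤ R) (K : ℝ) (hK : 0 < K) :
    ∃ y : V → ℝ, (∀ i, y i ∈ Set.Icc 0 R) ∧ ∑ i, y i ≤ B ∧
      ∑ i, ∑ j, slk Adj w y i j ≤ Fintype.card V / K := by
  let Φ : (V → ℝ) → ℝ := fun y => ∑ i, y i + (K / 4) * ∑ i, ∑ j, slk Adj w y i j ^ 2
  have hcont : Continuous Φ := by
    have : ∀ i j, Continuous fun y : V → ℝ => slk Adj w y i j := by
      intro i j
      unfold slk
      split_ifs <;> fun_prop
    fun_prop
  have hcomp : IsCompact (Set.pi Set.univ fun _ : V => Set.Icc (0 : ℝ) R) :=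
    isCompact_univ_pi fun _ => isCompact_Icc
  obtain ⟨y, hy, hmin⟩ := hcomp.exists_isMinOn ⟨fun _ => 0, by intro i _; simp [hR.le]⟩
    hcont.continuousOn
  have hyb : ∀ i, y i ∈ Set.Icc 0 R := fun i => hy i (Set.mem_univ _)
  have hsym : ∀ i j, slk Adj w y i j = slk Adj w y j i := by
    intro i j
    unfold slk
    by_cases h : Adj i j
    · rw [if_pos h, if_pos (hs _ _ h), hw i j]; congr 1; ring
    · rw [if_neg h, if_neg (fun h' => h (hs _ _ h'))]
  have hnn : ∀ i j, 0 ≤ slk Adj w y i j := by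
    intro i j; unfold slk; split_ifs <;> simp
  set n : ℝ := ((Fintype.card V : ℕ) : ℝ) with hn
  have key : ∀ i t, y i + t ∈ Set.Icc 0 R →
      0 ≤ t * (1 - K * ∑ j, slk Adj w y i j) + K * n ^ 2 * t ^ 2 := by
    intro i t ht
    let z : V → ℝ := Pi.single i t
    have hz : (y + z) ∈ Set.pi Set.univ fun _ : V => Set.Icc (0 : ℝ) R := by
      intro k _
      by_cases hk : k = i
      · subst hk; simpa [z] using ht
      · simpa [z, hk] using hyb k
    have h1 : Φ y ≤ Φ (y + z) := hmin hz
    have h2 : ∑ a, ∑ b, slk Adj w (y + z) a b ^ 2 ≤ ∑ a, ∑ b, (slk Adj w y a b ^ 2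
        - 2 * (z a + z b) * slk Adj w y a b + 4 * t ^ 2) := by
      refine Finset.sum_le_sum fun a _ => Finset.sum_le_sum fun b _ => ?_
      refine (slk_pen Adj w y z a b).trans ?_
      have : (z a + z b) ^ 2 ≤ 4 * t ^ 2 := by
        by_cases ha : a = i <;> by_cases hb : b = i <;> simp [z, ha, hb] <;> nlinarith [sq_nonneg t]
      linarith
    have h3 : ∑ a, ∑ b, (slk Adj w y a b ^ 2
        - 2 * (z a + z b) * slk Adj w y a b + 4 * t ^ 2) =
        ∑ a, ∑ b, slk Adj w y a b ^ 2 - 4 * t * ∑ j, slk Adj w y i j + 4 * n ^ 2 * t ^ 2 := by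
      have e1 : ∑ a, ∑ b, z a * slk Adj w y a b = t * ∑ j, slk Adj w y i j := by
        simp only [← Finset.mul_sum]
        simp [z, Pi.single_apply]
      have e2 : ∑ a, ∑ b, z b * slk Adj w y a b = t * ∑ j, slk Adj w y i j := by
        rw [Finset.sum_comm, ← e1]
        refine Finset.sum_congr rfl fun a _ => Finset.sum_congr rfl fun b _ => ?_
        rw [hsym]
      have e3 : ∀ a b, slk Adj w y a b ^ 2 - 2 * (z a + z b) * slk Adj w y a b + 4 * t ^ 2
        = slk Adj w y a b ^ 2 - 2 * (z a * slk Adj w y a b) - 2 * (z b * slk Adj w y a b)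
          + 4 * t ^ 2 := by intros; ring
      have e1' := e1
      simp only [← Finset.mul_sum] at e1'
      simp only [e3, Finset.sum_add_distrib, Finset.sum_sub_distrib, ← Finset.mul_sum, e1', e2]
      simp only [Finset.sum_const, Finset.card_univ, nsmul_eq_mul, ← hn]
      ring
    have h4 : ∑ a, (y + z) a = ∑ a, y a + t := by
      simp [z, Finset.sum_add_distrib]
    simp only [Φ, h4] at h1
    have h5 := mul_le_mul_of_nonneg_left (h2.trans_eq h3) (by positivity : 0 ≤ K / 4)
    nlinarith
  have hC : 0 ≤ K * n ^ 2 := by positivity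
  have hle : ∀ i, K * ∑ j, slk Adj w y i j ≤ 1 := by
    intro i
    by_contra hcon
    push Not at hcon
    have hlt : y i < R := by
      by_contra hh
      have h0 : ∑ j, slk Adj w y i j = 0 := by
        refine Finset.sum_eq_zero fun j _ => ?_
        unfold slk
        split_ifs
        · apply max_eq_right
          linarith [hwR i j, (hyb j).1]
        · rfl
      rw [h0] at hcon
      linarith
    have := small_aux (1 - K * ∑ j, slk Adj w y i j) _ (R - y i) (by linarith) hC (fun t h1 h2 =>
      key i t ⟨by linarith [(hyb i).1], by linarith⟩)
    linarith
  have heq : ∀ i, y i * (K * ∑ j, slk Adj w y i j) = y i := by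
    intro i
    rcases (hyb i).1.eq_or_lt with h | h
    · simp [← h]
    · have := small_aux (-(1 - K * ∑ j, slk Adj w y i j)) _ (y i) h hC (fun t h1 h2 => by
        have := key i (-t) ⟨by linarith, by linarith [(hyb i).2]⟩
        linarith)
      have h2 : K * ∑ j, slk Adj w y i j = 1 := le_antisymm (hle i) (by linarith)
      rw [h2, mul_one]
  refine ⟨y, hyb, ?_, ?_⟩
  · have hf : LPFeasible Adj fun i j => K * slk Adj w y i j := by
      refine ⟨fun i j => by simp only [hsym i j], fun i j _ => mul_nonneg hK.le (hnn i j), ?_⟩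
      intro i
      refine le_trans ?_ (hle i)
      rw [Finset.mul_sum]
      exact Finset.sum_le_sum_of_subset_of_nonneg (Finset.filter_subset _ _)
        fun j _ _ => mul_nonneg hK.le (hnn i j)
    refine le_trans ?_ (hB _ hf)
    rw [LPobj_eq_aux]
    have h1 : ∑ i, ∑ j, (y i + y j) * (K * slk Adj w y i j) ≤
        ∑ i, ∑ j, if Adj i j then w i j * (K * slk Adj w y i j) else 0 := by
      refine Finset.sum_le_sum fun i _ => Finset.sum_le_sum fun j _ => ?_
      unfold slk
      split_ifs
      · rcases le_total 0 (w i j - y i - y j) with h | h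
        · rw [max_eq_left h]
          exact mul_le_mul_of_nonneg_right (by linarith) (mul_nonneg hK.le h)
        · rw [max_eq_right h]; simp
      · simp
    have e1 : ∑ i, ∑ j, y i * (K * slk Adj w y i j) = ∑ i, y i := by
      refine Finset.sum_congr rfl fun i _ => ?_
      rw [← Finset.mul_sum, ← Finset.mul_sum, heq]
    have e2 : ∑ i, ∑ j, y j * (K * slk Adj w y i j) = ∑ i, y i := by
      rw [Finset.sum_comm, ← e1]
      refine Finset.sum_congr rfl fun a _ => Finset.sum_congr rfl fun b _ => ?_
      rw [hsym]
    simp only [add_mul, Finset.sum_add_distrib, e1, e2] at h1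
    linarith
  · calc ∑ i, ∑ j, slk Adj w y i j ≤ ∑ i : V, 1 / K := by
          refine Finset.sum_le_sum fun i _ => ?_
          rw [le_div_iff₀ hK]
          linarith [hle i]
      _ = n / K := by simp [hn, div_eq_mul_inv]

lemma dual_aux {V : Type*} [Fintype V] [DecidableEq V] (Adj : V → V → Prop) [DecidableRel Adj]
    (hs : ∀ i j, Adj i j → Adj j i) (w : V → V → ℝ) (hw : ∀ i j, w i j = w j i)
    (B : ℝ) (hB : ∀ x, LPFeasible Adj x → LPobj Adj w x ≤ B) :
    ∃ y : V → ℝ, (∀ i, 0 ≤ y i) ∧ (∀ i j, Adj i j → w i j ≤ y i + y j) ∧ ∑ i, y i ≤ B := by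
  obtain ⟨R, hR, hwR⟩ : ∃ R : ℝ, 0 < R ∧ ∀ i j, w i j ≤ R := by
    refine ⟨1 + ∑ i, ∑ j, |w i j|, by positivity, fun i j => ?_⟩
    have h1 : |w i j| ≤ ∑ j, |w i j| :=
      Finset.single_le_sum (f := fun j => |w i j|) (fun _ _ => abs_nonneg _) (Finset.mem_univ j)
    have h2 : ∑ j, |w i j| ≤ ∑ i, ∑ j, |w i j| :=
      Finset.single_le_sum (f := fun i => ∑ j, |w i j|)
        (fun _ _ => Finset.sum_nonneg fun _ _ => abs_nonneg _) (Finset.mem_univ i)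
    linarith [le_abs_self (w i j)]
  have hpen := dual_pen Adj hs w hw B hB R hR hwR
  let S : Set (V → ℝ) := (Set.pi Set.univ fun _ : V => Set.Icc (0 : ℝ) R) ∩ {y | ∑ i, y i ≤ B}
  have hS : IsCompact S := by
    refine (isCompact_univ_pi fun _ => isCompact_Icc).inter_right ?_
    exact isClosed_le (by fun_prop) continuous_const
  have hcont : Continuous fun y : V → ℝ => ∑ i, ∑ j, slk Adj w y i j := by
    have : ∀ i j, Continuous fun y : V → ℝ => slk Adj w y i j := by
      intro i j
      unfold slk
      split_ifs <;> fun_prop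
    fun_prop
  have hne : S.Nonempty := by
    obtain ⟨y, h1, h2, _⟩ := hpen 1 one_pos
    exact ⟨y, fun i _ => h1 i, h2⟩
  obtain ⟨y, hy, hmin⟩ := hS.exists_isMinOn hne hcont.continuousOn
  have hnn : ∀ i j, 0 ≤ slk Adj w y i j := by
    intro i j; unfold slk; split_ifs <;> simp
  have hz : ∑ i, ∑ j, slk Adj w y i j ≤ 0 := by
    refine le_of_forall_pos_le_add fun e he => ?_
    obtain ⟨z, h1, h2, h3⟩ := hpen ((Fintype.card V + 1) / e) (by positivity)
    have h4 : ∑ i, ∑ j, slk Adj w y i j ≤ ∑ i, ∑ j, slk Adj w z i j := hmin ⟨fun i _ => h1 i, h2⟩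
    have h5 : (Fintype.card V : ℝ) / ((Fintype.card V + 1) / e) ≤ e := by
      rw [div_div_eq_mul_div, div_le_iff₀ (by positivity)]
      nlinarith
    linarith
  refine ⟨y, fun i => (hy.1 i (Set.mem_univ _)).1, ?_, hy.2⟩
  intro i j hij
  have h1 : slk Adj w y i j ≤ ∑ j, slk Adj w y i j :=
    Finset.single_le_sum (f := fun j => slk Adj w y i j) (fun _ _ => hnn _ _) (Finset.mem_univ j)
  have h2 : ∑ j, slk Adj w y i j ≤ ∑ i, ∑ j, slk Adj w y i j :=
    Finset.single_le_sum (f := fun i => ∑ j, slk Adj w y i j)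
      (fun _ _ => Finset.sum_nonneg fun _ _ => hnn _ _) (Finset.mem_univ i)
  have h3 : w i j - y i - y j ≤ slk Adj w y i j := by
    unfold slk; rw [if_pos hij]; exact le_max_left _ _
  linarith

lemma core_aux {V : Type*} [Fintype V] (Adj : V → V → Prop) (w x s : V → V → ℝ) (g y : V → ℝ)
    (hs : ∀ i j, Adj i j → Adj j i) (sS : ∀ i j, s i j = s j i) (xS : ∀ i j, x i j = x j i)
    (wS : ∀ i j, w i j = w j i)
    (x0 : ∀ i j, Adj i j → 0 ≤ x i j)
    (xtight : ∀ i, 0 < y i → ∃ j, Adj i j ∧ 0 < x i j)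
    (xother : ∀ i j, 0 < y i → Adj i j → x i j = 1 / 2 → ∃ k, k ≠ j ∧ Adj i k ∧ 0 < x i k)
    (xone : ∀ i j k, Adj i j → Adj i k → j ≠ k → 0 < x i j → 0 < x i k → x i j = 1 / 2)
    (xthree : ∀ i j k l, Adj i j → Adj i k → Adj i l → j ≠ k → j ≠ l → k ≠ l →
      0 < x i j → 0 < x i k → 0 < x i l → False)
    (y0 : ∀ i, 0 ≤ y i)
    (ye : ∀ i j, Adj i j → 0 < x i j → y i + y j = w i j)
    (yn : ∀ i j, Adj i j → x i j = 0 → w i j < y i + y j)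
    (g0 : ∀ i, 0 ≤ g i)
    (F1 : ∀ i j, Adj i j → 0 ≤ s i j → g i + g j = w i j)
    (F1' : ∀ i j, Adj i j → s i j < 0 → w i j < g i + g j)
    (F2 : ∀ i j k, Adj i j → Adj i k → 0 < s i j → 0 ≤ s i k → k = j)
    (F3 : ∀ i j, Adj i j → 0 < g i → s i j ≤ 0 → ∃ k, k ≠ j ∧ Adj i k ∧ 0 ≤ s i k)
    (even : ∀ A B : Set V, Disjoint A B → (∀ i ∈ A, ∀ j, Adj i j → 0 < x i j → j ∈ B) →
      (∀ i ∈ B, ∀ j, Adj i j → 0 < x i j → j ∈ A) → ∀ i ∈ A, ∀ j, Adj i j → x i j ≠ 1 / 2)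
    (k l : V) (hkl : Adj k l) (hx : 0 < x k l) (hsk : s k l ≤ 0) : g l ≤ y l := by
  classical
  by_contra hcon
  push Not at hcon
  let T : V → Prop := fun l => y l < g l ∧ ∃ k, Adj k l ∧ 0 < x k l ∧ s k l ≤ 0
  obtain ⟨l0, hl0, hmax⟩ := Finset.exists_max_image (Finset.univ.filter T) (fun l => g l - y l)
    ⟨l, by simp only [Finset.mem_filter, Finset.mem_univ, true_and]; exact ⟨hcon, k, hkl, hx, hsk⟩⟩
  simp only [Finset.mem_filter, Finset.mem_univ, true_and] at hl0 hmax
  set M := g l0 - y l0 with hM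
  have hMp : 0 < M := by linarith [hl0.1]
  have dge : ∀ i j, Adj i j → w i j ≤ g i + g j := by
    intro i j h
    rcases le_or_gt 0 (s i j) with h' | h'
    · exact (F1 i j h h').ge
    · exact (F1' i j h h').le
  have step1 : ∀ l, T l → g l - y l = M → ∀ p, Adj l p → 0 ≤ s l p →
      0 < x l p ∧ s l p ≤ 0 ∧ g p - y p = -M := by
    intro l hT hl p hlp hsp
    have e1 := F1 l p hlp hsp
    rcases (x0 l p hlp).eq_or_lt with h | h
    · exfalso
      have e2 := yn l p hlp h.symm
      obtain ⟨q, hpq, hxq⟩ := xtight p (by linarith [g0 p])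
      have hql : l ≠ q := by
        rintro rfl
        rw [xS] at hxq; linarith
      have h3 : s p q ≤ 0 := by
        by_contra h4
        push Not at h4
        exact hql (F2 p q l hpq (hs _ _ hlp) h4 (by rw [sS]; exact hsp))
      have e3 := ye p q hpq hxq
      have e4 := dge p q hpq
      have := hmax q ⟨by linarith, p, hpq, hxq, h3⟩
      linarith
    · have e2 := ye l p hlp h
      refine ⟨h, ?_, by linarith⟩
      by_contra h4
      push Not at h4
      obtain ⟨-, k, hkl, hxk, hsk⟩ := hT
      have hkp : p ≠ k := by
        rintro rfl
        rw [sS] at hsk; linarith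
      have hhalf := xone l p k hlp (hs _ _ hkl) hkp h (by rw [xS]; exact hxk)
      obtain ⟨q, hql, hpq, hxq⟩ := xother p l (by linarith [g0 p]) (hs _ _ hlp)
        (by rw [xS]; exact hhalf)
      have h5 : s p q < 0 := by
        by_contra h6
        push Not at h6
        exact hql (F2 p l q (hs _ _ hlp) hpq (by rw [sS]; exact h4) h6)
      have e3 := ye p q hpq hxq
      have e4 := F1' p q hpq h5
      have := hmax q ⟨by linarith, p, hpq, hxq, h5.le⟩
      linarith
  have step2 : ∀ l, T l → g l - y l = M → (∃ j, Adj l j ∧ x l j = 1 / 2) ∧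
      ∀ j, Adj l j → 0 < x l j → 0 ≤ s l j := by
    intro l hT hl
    obtain ⟨hgl, k, hkl, hxk, hsk⟩ := id hT
    have hgp : 0 < g l := lt_of_le_of_lt (y0 l) hgl
    obtain ⟨k2, hk2, hlk2, hs2⟩ := F3 l k (hs _ _ hkl) hgp (by rw [sS]; exact hsk)
    have h2 := step1 l hT hl k2 hlk2 hs2
    obtain ⟨k3, hk3, hlk3, hs3⟩ := F3 l k2 hlk2 hgp h2.2.1
    have h3 := step1 l hT hl k3 hlk3 hs3
    refine ⟨⟨k2, hlk2, xone l k2 k3 hlk2 hlk3 hk3.symm h2.1 h3.1⟩, ?_⟩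
    intro j hlj hxj
    by_contra h4
    refine xthree l j k2 k3 hlj hlk2 hlk3 ?_ ?_ hk3.symm hxj h2.1 h3.1
    · rintro rfl; exact h4 hs2
    · rintro rfl; exact h4 hs3
  let A : Set V := {l | T l ∧ g l - y l = M}
  let B : Set V := {p | ∃ l ∈ A, Adj l p ∧ 0 < x l p}
  have hB : ∀ p ∈ B, ∃ l, Adj l p ∧ 0 ≤ s l p ∧ s l p ≤ 0 ∧ g p - y p = -M := by
    rintro p ⟨l, hlA, hlp, hxp⟩
    have h1 := (step2 l hlA.1 hlA.2).2 p hlp hxp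
    have h2 := step1 l hlA.1 hlA.2 p hlp h1
    exact ⟨l, hlp, h1, h2.2⟩
  obtain ⟨⟨j, hj, hxj⟩, -⟩ := step2 l0 hl0 rfl
  refine even A B ?_ ?_ ?_ l0 ⟨hl0, rfl⟩ j hj hxj
  · rw [Set.disjoint_left]
    rintro a ha hb
    obtain ⟨_, _, _, _, h⟩ := hB a hb
    have := ha.2
    linarith
  · intro i hi j hij hxij
    exact ⟨i, hi, hij, hxij⟩
  · intro p hp q hpq hxq
    obtain ⟨l, hlp, h1, h2, h3⟩ := hB p hp
    have h4 : s p q ≤ 0 := by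
      by_contra h4
      push Not at h4
      have := F2 p q l hpq (hs _ _ hlp) h4 (by rw [sS]; exact h1)
      subst this
      rw [sS] at h4
      linarith
    have e3 := ye p q hpq hxq
    have e4 := dge p q hpq
    have hT : T q := ⟨by linarith, p, hpq, hxq, h4⟩
    exact ⟨hT, le_antisymm (hmax q hT) (by linarith)⟩

lemma fp_aux {V : Type*} [Fintype V] [DecidableEq V]
    (Adj : V → V → Prop) [DecidableRel Adj] (w : V → V → ℝ)
    (hG : GoodGraph Adj w) (κ : ℝ) (hκ : κ ∈ Set.Ioo (0 : ℝ) 1)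
    (α : V → V → ℝ) (hnn : ∀ i j, Adj i j → 0 ≤ α i j)
    (hfp : IsFixedPoint Adj w κ α) :
    ∃ g : V → ℝ, (∀ i, 0 ≤ g i) ∧
    (∀ i j, Adj i j → 0 ≤ w i j - α i j - α j i → g i + g j = w i j) ∧
    (∀ i j, Adj i j → w i j - α i j - α j i < 0 → w i j < g i + g j) ∧
    (∀ i j k, Adj i j → Adj i k → 0 < w i j - α i j - α j i → 0 ≤ w i k - α i k - α k i → k = j) ∧
    (∀ i j, Adj i j → 0 < g i → w i j - α i j - α j i ≤ 0 →
      ∃ k, k ≠ j ∧ Adj i k ∧ 0 ≤ w i k - α i k - α k i) := by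
  obtain ⟨hs, -, hw, -⟩ := hG
  have hb : ∀ i j, Adj i j → bestAlt Adj w α i j = α i j := by
    intro i j h
    have h1 := hfp i j h
    unfold step at h1
    have h2 : κ * (bestAlt Adj w α i j - α i j) = 0 := by linarith
    rcases mul_eq_zero.1 h2 with h3 | h3
    · linarith [hκ.1]
    · linarith
  have hge : ∀ i j k, Adj i j → Adj i k → k ≠ j → offer w α k i ≤ α i j := by
    intro i j k hij hik hkj
    rw [← hb i j hij]
    exact (Finset.le_fold_max _).2 (Or.inr ⟨k, by simp [hik, hkj], le_rfl⟩)
  have hatt : ∀ i j, Adj i j → 0 < α i j → ∃ k, k ≠ j ∧ Adj i k ∧ α i j ≤ offer w α k i := by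
    intro i j hij h
    have h1 : α i j ≤ bestAlt Adj w α i j := (hb i j hij).ge
    rcases (Finset.le_fold_max _).1 h1 with h2 | ⟨k, hk, h2⟩
    · linarith
    · simp only [Finset.mem_filter, Finset.mem_univ, true_and] at hk
      exact ⟨k, hk.2, hk.1, h2⟩
  have hearn : ∀ i j, Adj i j → earn Adj w α i = max (α i j) (offer w α j i) := by
    intro i j hij
    apply le_antisymm
    · refine (Finset.fold_max_le _).2 ⟨le_max_of_le_left (hnn i j hij), ?_⟩
      intro k hk
      simp only [Finset.mem_filter, Finset.mem_univ, true_and] at hk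
      by_cases hkj : k = j
      · subst hkj; exact le_max_right _ _
      · exact le_max_of_le_left (hge i j k hij hk hkj)
    · apply max_le
      · rw [← hb i j hij]
        refine (Finset.fold_max_le _).2 ⟨(Finset.le_fold_max _).2 (Or.inl le_rfl), ?_⟩
        intro k hk
        simp only [Finset.mem_filter, Finset.mem_univ, true_and] at hk
        exact (Finset.le_fold_max _).2 (Or.inr ⟨k, by simp [hk.1], le_rfl⟩)
      · exact (Finset.le_fold_max _).2 (Or.inr ⟨j, by simp [hij], le_rfl⟩)
  have hop : ∀ i j, Adj i j → 0 ≤ w i j - α i j - α j i →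
      offer w α j i = α i j + (w i j - α i j - α j i) / 2 := by
    intro i j hij h
    unfold offer
    rw [hw j i, max_eq_left (by linarith [hnn i j hij]), max_eq_left (by linarith)]
    ring
  have hon : ∀ i j, w i j - α i j - α j i ≤ 0 → offer w α j i = max (w i j - α j i) 0 := by
    intro i j h
    unfold offer
    rw [hw j i, max_eq_right (a := w i j - α j i - α i j) (by linarith)]
    ring
  have hole : ∀ i j, Adj i j → w i j - α i j - α j i ≤ 0 → offer w α j i ≤ α i j := by
    intro i j hij h
    rw [hon i j h]
    exact max_le (by linarith) (hnn i j hij)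
  refine ⟨earn Adj w α, ?_, ?_, ?_, ?_, ?_⟩
  · intro i
    exact (Finset.le_fold_max _).2 (Or.inl le_rfl)
  · intro i j hij h
    have h' : 0 ≤ w j i - α j i - α i j := by rw [hw j i]; linarith
    rw [hearn i j hij, hearn j i (hs _ _ hij), hop i j hij h, hop j i (hs _ _ hij) h',
      max_eq_right (by linarith), max_eq_right (by linarith), hw j i]
    ring
  · intro i j hij h
    rw [hearn i j hij, hearn j i (hs _ _ hij)]
    have h1 := le_max_left (α i j) (offer w α j i)
    have h2 := le_max_left (α j i) (offer w α i j)
    linarith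
  · intro i j k hij hik h1 h2
    by_contra hkj
    have e1 := hge i j k hij hik hkj
    have e2 := hge i k j hik hij (Ne.symm hkj)
    rw [hop i k hik h2] at e1
    rw [hop i j hij h1.le] at e2
    linarith
  · intro i j hij hg h
    rw [hearn i j hij, max_eq_left (hole i j hij h)] at hg
    obtain ⟨k, hkj, hik, hk⟩ := hatt i j hij hg
    refine ⟨k, hkj, hik, ?_⟩
    by_contra h1
    push Not at h1
    have h2 := hon i k h1.le
    have h3 := hge i k j hik hij (Ne.symm hkj)
    have h4 := hearn i j hij
    rw [max_eq_left (hole i j hij h), hearn i k hik, max_eq_left (hole i k hik h1.le)] at h4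
    rcases le_total (w i k - α k i) 0 with h5 | h5
    · rw [max_eq_right h5] at h2; linarith
    · rw [max_eq_left h5] at h2; linarith

lemma sdual_aux {V : Type*} [Fintype V] [DecidableEq V]
    (Adj : V → V → Prop) [DecidableRel Adj] (w : V → V → ℝ)
    (hG : GoodGraph Adj w)
    (xstar : V → V → ℝ) (hfeas : LPFeasible Adj xstar)
    (ε : ℝ) (hε : 0 < ε)
    (hgap : ∀ x, LPFeasible Adj x →
      (∀ i j, Adj i j → x i j = 0 ∨ x i j = 1 / 2 ∨ x i j = 1) →
      (∃ i j, Adj i j ∧ x i j ≠ xstar i j) →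
      LPobj Adj w x + ε ≤ LPobj Adj w xstar) :
    ∃ y : V → ℝ, (∀ i, 0 ≤ y i) ∧ (∀ i j, Adj i j → 0 < xstar i j → y i + y j = w i j) ∧
      (∀ i j, Adj i j → xstar i j = 0 → w i j < y i + y j) ∧
      (∀ i, 0 < y i → ∑ j ∈ Finset.univ.filter (fun j => Adj i j), xstar i j = 1) := by
  obtain ⟨hs, -, hw, -⟩ := hG
  obtain ⟨xS, x0, xr⟩ := hfeas
  set n : ℝ := ((Fintype.card V : ℕ) : ℝ) with hn
  have hn0 : 0 ≤ n := by positivity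
  set η : ℝ := ε / (n + 1) with hη
  have hηp : 0 < η := by positivity
  have hηn : η * n ≤ ε := by
    rw [hη, div_mul_eq_mul_div, div_le_iff₀ (by positivity)]
    nlinarith
  let w' : V → V → ℝ := fun i j => w i j + η * (if xstar i j = 0 then 1 else 0)
  have hw' : ∀ i j, w' i j = w' j i := by
    intro i j; simp only [w', hw i j, xS i j]
  have hstar : LPobj Adj w' xstar = LPobj Adj w xstar := by
    rw [LPobj_eq_aux, LPobj_eq_aux]
    congr 1
    refine Finset.sum_congr rfl fun i _ => Finset.sum_congr rfl fun j _ => ?_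
    by_cases h : xstar i j = 0 <;> simp [w', h]
  have hB : ∀ x, LPFeasible Adj x → LPobj Adj w' x ≤ LPobj Adj w xstar := by
    rintro x ⟨hxS, hx0, hxr⟩
    let X : V → V → ℝ := fun i j => if Adj i j then x i j else 0
    have hXr : ∀ i, ∑ j, X i j ≤ 1 := by
      intro i
      simp only [X, ← Finset.sum_filter]
      exact hxr i
    have hXS : ∀ i j, X i j = X j i := by
      intro i j
      simp only [X]
      by_cases h : Adj i j
      · rw [if_pos h, if_pos (hs _ _ h), hxS]
      · rw [if_neg h, if_neg (fun h' => h (hs _ _ h'))]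
    obtain ⟨P, hP01, hPr, hPc, hPs, hPo⟩ := birk_aux X
      (by intro i j; simp only [X]; split_ifs with h; exacts [hx0 i j h, le_rfl]) hXr
      (by intro j; simp only [hXS _ j]; exact hXr j) w'
    have hPn : ∀ i j, ¬ Adj i j → P i j = 0 := fun i j h => hPs i j (by simp [X, h])
    have hP0 : ∀ i j, 0 ≤ P i j := by
      intro i j; rcases hP01 i j with h | h <;> rw [h]; norm_num
    let q : V → V → ℝ := fun i j => (P i j + P j i) / 2
    have hq0 : ∀ i j, 0 ≤ q i j := fun i j => by
      have := hP0 i j; have := hP0 j i; simp only [q]; linarith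
    have hqr : ∀ i, ∑ j, q i j ≤ 1 := by
      intro i
      simp only [q, ← Finset.sum_div, Finset.sum_add_distrib]
      have := hPr i; have := hPc i
      linarith
    have hqf : LPFeasible Adj q := by
      refine ⟨fun i j => by simp only [q]; ring, fun i j _ => hq0 i j, fun i => ?_⟩
      exact (Finset.sum_le_sum_of_subset_of_nonneg (Finset.filter_subset _ _)
        fun j _ _ => hq0 i j).trans (hqr i)
    have hqh : ∀ i j, Adj i j → q i j = 0 ∨ q i j = 1 / 2 ∨ q i j = 1 := by
      intro i j _
      rcases hP01 i j with h | h <;> rcases hP01 j i with h' | h' <;> simp [q, h, h']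
    have h1 : LPobj Adj w' x ≤ LPobj Adj w' q := by
      rw [LPobj_eq_aux, LPobj_eq_aux]
      have e1 : ∑ i, ∑ j, (if Adj i j then w' i j * x i j else 0) =
          ∑ i, ∑ j, w' i j * X i j := by
        refine Finset.sum_congr rfl fun i _ => Finset.sum_congr rfl fun j _ => ?_
        simp [X]
      have e2 : ∑ i, ∑ j, (if Adj i j then w' i j * q i j else 0) =
          ∑ i, ∑ j, w' i j * q i j := by
        refine Finset.sum_congr rfl fun i _ => Finset.sum_congr rfl fun j _ => ?_
        split_ifs with h
        · rfl
        · simp [q, hPn i j h, hPn j i (fun h' => h (hs _ _ h'))]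
      have e3 : ∑ i, ∑ j, w' i j * P j i = ∑ i, ∑ j, w' i j * P i j := by
        rw [Finset.sum_comm]
        refine Finset.sum_congr rfl fun i _ => Finset.sum_congr rfl fun j _ => ?_
        rw [hw']
      have e4 : ∑ i, ∑ j, w' i j * q i j = ∑ i, ∑ j, w' i j * P i j := by
        have : ∀ i j, w' i j * q i j = (w' i j * P i j) / 2 + (w' i j * P j i) / 2 := by
          intro i j; simp only [q]; ring
        simp only [this, Finset.sum_add_distrib, ← Finset.sum_div, e3]
        ring
      rw [e1, e2, e4]
      linarith
    refine h1.trans ?_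
    by_cases hd : ∃ i j, Adj i j ∧ q i j ≠ xstar i j
    · have h2 := hgap q hqf hqh hd
      have h3 : LPobj Adj w' q ≤ LPobj Adj w q + η * n := by
        rw [LPobj_eq_aux, LPobj_eq_aux]
        have : ∑ i, ∑ j, (if Adj i j then w' i j * q i j else 0) ≤
            ∑ i, ∑ j, ((if Adj i j then w i j * q i j else 0) + η * q i j) := by
          refine Finset.sum_le_sum fun i _ => Finset.sum_le_sum fun j _ => ?_
          have hpos := mul_nonneg hηp.le (hq0 i j)
          by_cases ha : Adj i j <;> by_cases hb : xstar i j = 0 <;>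
            simp only [w', ha, hb, if_true, if_false] <;> linarith
        simp only [Finset.sum_add_distrib, ← Finset.mul_sum] at this
        have h4 : ∑ i, ∑ j, q i j ≤ n := by
          calc ∑ i, ∑ j, q i j ≤ ∑ i : V, (1 : ℝ) := Finset.sum_le_sum fun i _ => hqr i
            _ = n := by simp [hn]
        have h5 := mul_le_mul_of_nonneg_left h4 hηp.le
        have h6 : 0 ≤ η * n := by positivity
        linarith
      linarith
    · push Not at hd
      rw [← hstar, LPobj_eq_aux, LPobj_eq_aux]
      apply le_of_eq
      congr 1
      refine Finset.sum_congr rfl fun i _ => Finset.sum_congr rfl fun j _ => ?_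
      split_ifs with h
      · rw [hd i j h]
      · rfl
  obtain ⟨y, y0, yw, yB⟩ := dual_aux Adj hs w' hw' _ hB
  let r : V → ℝ := fun i => ∑ j ∈ Finset.univ.filter (fun j => Adj i j), xstar i j
  have hA0 : ∀ i j, 0 ≤ if Adj i j then (y i + y j - w' i j) * xstar i j else 0 := by
    intro i j
    split_ifs with h
    · exact mul_nonneg (by linarith [yw i j h]) (x0 i j h)
    · exact le_rfl
  have hC0 : ∀ i, 0 ≤ y i * (1 - r i) := fun i => mul_nonneg (y0 i) (by linarith [xr i])
  have hsum : (∑ i, ∑ j, if Adj i j then (y i + y j - w' i j) * xstar i j else 0) +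
      2 * ∑ i, y i * (1 - r i) = 2 * ∑ i, y i - 2 * LPobj Adj w' xstar := by
    rw [LPobj_eq_aux]
    have e0 : ∀ i j, (if Adj i j then (y i + y j - w' i j) * xstar i j else 0) =
        y i * (if Adj i j then xstar i j else 0) + y j * (if Adj i j then xstar i j else 0)
        - (if Adj i j then w' i j * xstar i j else 0) := by
      intro i j; split_ifs <;> ring
    have e1 : ∑ i, ∑ j, y i * (if Adj i j then xstar i j else 0) = ∑ i, y i * r i := by
      refine Finset.sum_congr rfl fun i _ => ?_
      rw [← Finset.mul_sum]
      simp only [r, Finset.sum_filter]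
    have e2 : ∑ i, ∑ j, y j * (if Adj i j then xstar i j else 0) = ∑ i, y i * r i := by
      rw [Finset.sum_comm, ← e1]
      refine Finset.sum_congr rfl fun i _ => Finset.sum_congr rfl fun j _ => ?_
      by_cases h : Adj i j
      · rw [if_pos h, if_pos (hs _ _ h), xS]
      · rw [if_neg h, if_neg (fun h' => h (hs _ _ h'))]
    simp only [e0, Finset.sum_sub_distrib, Finset.sum_add_distrib, e1, e2, mul_sub, mul_one]
    ring
  have hAn : 0 ≤ ∑ i, ∑ j, if Adj i j then (y i + y j - w' i j) * xstar i j else 0 :=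
    Finset.sum_nonneg fun i _ => Finset.sum_nonneg fun j _ => hA0 i j
  have hCn : 0 ≤ ∑ i, y i * (1 - r i) := Finset.sum_nonneg fun i _ => hC0 i
  have hAz : ∑ i, ∑ j, (if Adj i j then (y i + y j - w' i j) * xstar i j else 0) = 0 := by
    linarith
  have hCz : ∑ i, y i * (1 - r i) = 0 := by linarith
  refine ⟨y, y0, ?_, ?_, ?_⟩
  · intro i j hij hx
    rw [Finset.sum_eq_zero_iff_of_nonneg
      (fun i _ => Finset.sum_nonneg fun j _ => hA0 i j)] at hAz
    have h1 := hAz i (Finset.mem_univ _)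
    rw [Finset.sum_eq_zero_iff_of_nonneg (fun j _ => hA0 i j)] at h1
    have h2 := h1 j (Finset.mem_univ _)
    rw [if_pos hij] at h2
    rcases mul_eq_zero.1 h2 with h3 | h3
    · simp only [w', hx.ne', if_false] at h3
      linarith
    · linarith
  · intro i j hij hx
    have := yw i j hij
    simp only [w', hx, if_true] at this
    linarith
  · intro i hi
    rw [Finset.sum_eq_zero_iff_of_nonneg (fun i _ => hC0 i)] at hCz
    rcases mul_eq_zero.1 (hCz i (Finset.mem_univ _)) with h3 | h3
    · linarith
    · simp only [r] at h3; linarith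

lemma even_aux {V : Type*} [Fintype V] [DecidableEq V]
    (Adj : V → V → Prop) [DecidableRel Adj] (w : V → V → ℝ)
    (hG : GoodGraph Adj w)
    (xstar : V → V → ℝ) (hfeas : LPFeasible Adj xstar)
    (hhalf : ∀ i j, Adj i j → xstar i j = 0 ∨ xstar i j = 1 / 2 ∨ xstar i j = 1)
    (ε : ℝ) (hε : 0 < ε)
    (hgap : ∀ x, LPFeasible Adj x →
      (∀ i j, Adj i j → x i j = 0 ∨ x i j = 1 / 2 ∨ x i j = 1) →
      (∃ i j, Adj i j ∧ x i j ≠ xstar i j) →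
      LPobj Adj w x + ε ≤ LPobj Adj w xstar) (A B : Set V) (hdis : Disjoint A B)
    (hA : ∀ i ∈ A, ∀ j, Adj i j → 0 < xstar i j → j ∈ B)
    (hB : ∀ i ∈ B, ∀ j, Adj i j → 0 < xstar i j → j ∈ A) (i : V) (hi : i ∈ A)
    (j : V) (hij : Adj i j) : xstar i j ≠ 1 / 2 := by
  classical
  intro hx
  obtain ⟨hs, -, hw, -⟩ := hG
  obtain ⟨xS, x0, xr⟩ := hfeas
  rw [Set.disjoint_left] at hdis
  let X : V → V → ℝ := fun i j => if Adj i j ∧ i ∈ A ∧ j ∈ B then xstar i j else 0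
  have hX0 : ∀ i j, 0 ≤ X i j := by
    intro i j; simp only [X]; split_ifs with h; exacts [x0 i j h.1, le_rfl]
  have hXr : ∀ i, ∑ j, X i j ≤ 1 := by
    intro i
    refine le_trans ?_ (xr i)
    rw [Finset.sum_filter]
    refine Finset.sum_le_sum fun j _ => ?_
    simp only [X]
    by_cases h : Adj i j
    · rw [if_pos h]; split_ifs
      · exact le_rfl
      · exact x0 i j h
    · simp [h]
  have hXc : ∀ j, ∑ i, X i j ≤ 1 := by
    intro j
    refine le_trans ?_ (xr j)
    rw [Finset.sum_filter]
    refine Finset.sum_le_sum fun i _ => ?_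
    simp only [X]
    by_cases h : Adj i j
    · rw [if_pos (hs _ _ h), xS j i]; split_ifs
      · exact le_rfl
      · exact x0 i j h
    · simp [h, show ¬ Adj j i from fun h' => h (hs _ _ h')]
  obtain ⟨P, hP01, hPr, hPc, hPs, hPo⟩ := birk_aux X hX0 hXr hXc w
  have hP0 : ∀ i j, 0 ≤ P i j := by
    intro i j; rcases hP01 i j with h | h <;> rw [h]; norm_num
  have hPn : ∀ i j, ¬ (Adj i j ∧ i ∈ A ∧ j ∈ B) → P i j = 0 := fun i j h =>
    hPs i j (by simp only [X, if_neg h])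
  have hXn : ∀ i j, ¬ (Adj i j ∧ i ∈ A ∧ j ∈ B) → X i j = 0 := fun i j h => by
    simp only [X, if_neg h]
  have hXA : ∀ i j, Adj i j → i ∈ A → X i j = xstar i j := by
    intro i j h hi
    simp only [X]
    split_ifs with h'
    · rfl
    · by_contra h2
      exact h' ⟨h, hi, hA i hi j h (lt_of_le_of_ne (x0 i j h) h2)⟩
  have hXB : ∀ i j, Adj i j → i ∈ B → X j i = xstar i j := by
    intro i j h hi
    simp only [X]
    split_ifs with h'
    · rw [xS]
    · by_contra h2
      exact h' ⟨hs _ _ h, hB i hi j h (lt_of_le_of_ne (x0 i j h) h2), hi⟩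
  let q : V → V → ℝ := fun i j => xstar i j + (P i j - X i j) + (P j i - X j i)
  have qA : ∀ i j, Adj i j → i ∈ A → q i j = P i j := by
    intro i j h hi
    have hn : ¬ (Adj j i ∧ j ∈ A ∧ i ∈ B) := fun h' => hdis hi h'.2.2
    simp only [q, hXA i j h hi, hPn j i hn, hXn j i hn]; ring
  have qB : ∀ i j, Adj i j → i ∈ B → q i j = P j i := by
    intro i j h hi
    have hn : ¬ (Adj i j ∧ i ∈ A ∧ j ∈ B) := fun h' => hdis h'.2.1 hi
    simp only [q, hXB i j h hi, hPn i j hn, hXn i j hn]; ring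
  have qO : ∀ i j, i ∉ A → i ∉ B → q i j = xstar i j := by
    intro i j h hi
    have hn : ¬ (Adj i j ∧ i ∈ A ∧ j ∈ B) := fun h' => h h'.2.1
    have hn' : ¬ (Adj j i ∧ j ∈ A ∧ i ∈ B) := fun h' => hi h'.2.2
    simp only [q, hPn i j hn, hXn i j hn, hPn j i hn', hXn j i hn']; ring
  have hqf : LPFeasible Adj q := by
    refine ⟨fun i j => by simp only [q, xS i j]; ring, fun i j h => ?_, fun i => ?_⟩
    · by_cases hi : i ∈ A
      · rw [qA i j h hi]; exact hP0 _ _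
      by_cases hi' : i ∈ B
      · rw [qB i j h hi']; exact hP0 _ _
      · rw [qO i j hi hi']; exact x0 i j h
    · by_cases hi : i ∈ A
      · calc _ = ∑ j ∈ Finset.univ.filter (fun j => Adj i j), P i j :=
              Finset.sum_congr rfl fun j hj => qA i j (by simpa using hj) hi
          _ ≤ ∑ j, P i j := Finset.sum_le_sum_of_subset_of_nonneg (Finset.filter_subset _ _)
              fun j _ _ => hP0 i j
          _ ≤ 1 := hPr i
      by_cases hi' : i ∈ B
      · calc _ = ∑ j ∈ Finset.univ.filter (fun j => Adj i j), P j i :=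
              Finset.sum_congr rfl fun j hj => qB i j (by simpa using hj) hi'
          _ ≤ ∑ j, P j i := Finset.sum_le_sum_of_subset_of_nonneg (Finset.filter_subset _ _)
              fun j _ _ => hP0 j i
          _ ≤ 1 := hPc i
      · simp only [qO i _ hi hi']; exact xr i
  have hqh : ∀ i j, Adj i j → q i j = 0 ∨ q i j = 1 / 2 ∨ q i j = 1 := by
    intro i j h
    by_cases hi : i ∈ A
    · rw [qA i j h hi]; rcases hP01 i j with h | h <;> simp [h]
    by_cases hi' : i ∈ B
    · rw [qB i j h hi']; rcases hP01 j i with h | h <;> simp [h]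
    · rw [qO i j hi hi']; exact hhalf i j h
  have h1 := hgap q hqf hqh ⟨i, j, hij, by
    rw [qA i j hij hi, hx]; rcases hP01 i j with h | h <;> rw [h] <;> norm_num⟩
  have h2 : LPobj Adj w q = LPobj Adj w xstar +
      (∑ i, ∑ j, w i j * P i j - ∑ i, ∑ j, w i j * X i j) := by
    rw [LPobj_eq_aux, LPobj_eq_aux]
    have e0 : ∀ i j, (if Adj i j then w i j * q i j else 0) =
        (if Adj i j then w i j * xstar i j else 0) + w i j * P i j - w i j * X i j
          + w j i * P j i - w j i * X j i := by
      intro i j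
      by_cases h : Adj i j
      · rw [if_pos h, if_pos h, hw j i]; simp only [q]; ring
      · have h' : ¬ Adj j i := fun h' => h (hs _ _ h')
        rw [if_neg h, if_neg h, hPn i j (fun h1 => h h1.1), hPn j i (fun h1 => h' h1.1),
          hXn i j (fun h1 => h h1.1), hXn j i (fun h1 => h' h1.1)]
        ring
    have e1 : ∑ i, ∑ j, w j i * P j i = ∑ i, ∑ j, w i j * P i j := Finset.sum_comm
    have e2 : ∑ i, ∑ j, w j i * X j i = ∑ i, ∑ j, w i j * X i j := Finset.sum_comm
    simp only [e0, Finset.sum_add_distrib, Finset.sum_sub_distrib, e1, e2]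
    ring
  linarith

/-- If the LP relaxation is pointed, then at any fixed point of the natural dynamics
every 1-solid edge is strong-dotted and every ½-solid edge is weak-dotted. -/
theorem stmt15 {V : Type*} [Fintype V] [DecidableEq V]
    (Adj : V → V → Prop) [DecidableRel Adj] (w : V → V → ℝ)
    (hG : GoodGraph Adj w) (κ : ℝ) (hκ : κ ∈ Set.Ioo (0 : ℝ) 1)
    (xstar : V → V → ℝ) (hfeas : LPFeasible Adj xstar)
    (hhalf : ∀ i j, Adj i j → xstar i j = 0 ∨ xstar i j = 1 / 2 ∨ xstar i j = 1)
    (ε : ℝ) (hε : 0 < ε)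
    (hopt : ∀ x, LPFeasible Adj x → LPobj Adj w x ≤ LPobj Adj w xstar)
    (hgap : ∀ x, LPFeasible Adj x →
      (∀ i j, Adj i j → x i j = 0 ∨ x i j = 1 / 2 ∨ x i j = 1) →
      (∃ i j, Adj i j ∧ x i j ≠ xstar i j) →
      LPobj Adj w x + ε ≤ LPobj Adj w xstar)
    (α : V → V → ℝ) (hnn : ∀ i j, Adj i j → 0 ≤ α i j)
    (hfp : IsFixedPoint Adj w κ α) :
    ∀ i j, Adj i j →
      (xstar i j = 1 → 0 < w i j - α i j - α j i) ∧
      (xstar i j = 1 / 2 → w i j - α i j - α j i = 0) := by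
  have hG' := hG
  obtain ⟨hs, -, wS, wpos⟩ := hG'
  have hfeas' := hfeas
  obtain ⟨xS, x0, xr⟩ := hfeas'
  obtain ⟨g, g0, F1, F1', F2, F3⟩ := fp_aux Adj w hG κ hκ α hnn hfp
  obtain ⟨y, y0, ye, yn, yt⟩ := sdual_aux Adj w hG xstar hfeas ε hε hgap
  have even := even_aux Adj w hG xstar hfeas hhalf ε hε hgap
  let s : V → V → ℝ := fun i j => w i j - α i j - α j i
  have sS : ∀ i j, s i j = s j i := by
    intro i j; simp only [s, wS i j]; ring
  have xge : ∀ i j, Adj i j → 0 < xstar i j → 1 / 2 ≤ xstar i j := by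
    intro i j h h'
    rcases hhalf i j h with h1 | h1 | h1 <;> rw [h1] at h' ⊢ <;> norm_num at *
  have xsub : ∀ i (S : Finset V), (∀ j ∈ S, Adj i j) → ∑ j ∈ S, xstar i j ≤ 1 := by
    intro i S hS
    refine le_trans (Finset.sum_le_sum_of_subset_of_nonneg ?_ ?_) (xr i)
    · intro j hj; simpa using hS j hj
    · intro j hj _; exact x0 i j (by simpa using hj)
  have xtwo : ∀ i j k, Adj i j → Adj i k → j ≠ k → xstar i j + xstar i k ≤ 1 := by
    intro i j k hj hk hjk
    have := xsub i {j, k} (by simp [hj, hk])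
    rwa [Finset.sum_pair hjk] at this
  have xtight : ∀ i, 0 < y i → ∃ j, Adj i j ∧ 0 < xstar i j := by
    intro i hi
    by_contra hcon
    push Not at hcon
    have h1 := yt i hi
    have h2 : ∑ j ∈ Finset.univ.filter (fun j => Adj i j), xstar i j ≤ 0 :=
      Finset.sum_nonpos fun j hj => hcon j (by simpa using hj)
    linarith
  have xother : ∀ i j, 0 < y i → Adj i j → xstar i j = 1 / 2 →
      ∃ k, k ≠ j ∧ Adj i k ∧ 0 < xstar i k := by
    intro i j hi hij hx
    by_contra hcon
    push Not at hcon
    have h1 := yt i hi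
    rw [← Finset.add_sum_erase _ _ (show j ∈ Finset.univ.filter (fun j => Adj i j) by simpa using hij),
      hx] at h1
    have h2 : ∑ k ∈ (Finset.univ.filter (fun j => Adj i j)).erase j, xstar i k ≤ 0 :=
      Finset.sum_nonpos fun k hk => hcon k (Finset.ne_of_mem_erase hk)
        (by simpa using Finset.mem_of_mem_erase hk)
    linarith
  have xone : ∀ i j k, Adj i j → Adj i k → j ≠ k → 0 < xstar i j → 0 < xstar i k →
      xstar i j = 1 / 2 := by
    intro i j k hj hk hjk h1 h2
    have := xtwo i j k hj hk hjk
    have := xge i j hj h1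
    have := xge i k hk h2
    linarith
  have xthree : ∀ i j k l, Adj i j → Adj i k → Adj i l → j ≠ k → j ≠ l → k ≠ l →
      0 < xstar i j → 0 < xstar i k → 0 < xstar i l → False := by
    intro i j k l hj hk hl hjk hjl hkl h1 h2 h3
    have h4 := xsub i {j, k, l} (by simp [hj, hk, hl])
    rw [Finset.sum_insert (by simp [hjk, hjl]), Finset.sum_pair hkl] at h4
    have := xge i j hj h1
    have := xge i k hk h2
    have := xge i l hl h3
    linarith
  have core := core_aux Adj w xstar s g y hs sS xS wS x0 xtight xother xone xthree y0 ye yn g0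
    F1 F1' F2 F3 even
  have weak : ∀ i j, Adj i j → 0 < xstar i j → s i j ≤ 0 →
      s i j = 0 ∧ g i = y i ∧ g j = y j := by
    intro i j hij hx h
    have h1 := core i j hij hx h
    have h2 := core j i (hs _ _ hij) (by rw [xS]; exact hx) (by rw [sS]; exact h)
    have h3 := ye i j hij hx
    rcases h.eq_or_lt with h4 | h4
    · have := F1 i j hij h4.ge
      exact ⟨h4, by linarith, by linarith⟩
    · have := F1' i j hij h4
      linarith
  have caseA : ∀ i j, Adj i j → xstar i j = 1 → s i j ≤ 0 → ¬ 0 < g i := by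
    intro i j hij hx h hg
    obtain ⟨k, hkj, hik, hsk⟩ := F3 i j hij hg h
    have hxk : xstar i k = 0 := by
      have := xtwo i j k hij hik (Ne.symm hkj)
      have := x0 i k hik
      linarith
    have e1 := F1 i k hik hsk
    have e2 := yn i k hik hxk
    have e3 := (weak i j hij (by rw [hx]; norm_num) h).2.1
    obtain ⟨l, hkl, hxl⟩ := xtight k (by linarith [g0 k])
    have hli : i ≠ l := by
      rintro rfl
      rw [xS] at hxl; linarith
    have hsl : s k l ≤ 0 := by
      by_contra h4
      push Not at h4
      exact hli (F2 k l i hkl (hs _ _ hik) h4 (by change 0 ≤ s k i; rw [sS]; exact hsk))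
    have := (weak k l hkl hxl hsl).2.1
    linarith
  have caseB : ∀ i j, Adj i j → xstar i j = 1 / 2 → 0 < s i j → ¬ 0 < y i := by
    intro i j hij hx h hy
    obtain ⟨k, hkj, hik, hxk⟩ := xother i j hy hij hx
    rcases le_or_gt (s i k) 0 with h1 | h1
    · exact hkj (F2 i j k hij hik h (weak i k hik hxk h1).1.ge)
    · exact hkj (F2 i j k hij hik h h1.le)
  intro i j hij
  have hwp := wpos i j hij
  refine ⟨fun hx => ?_, fun hx => ?_⟩
  · by_contra hcon
    have hcon' : s i j ≤ 0 := not_lt.1 hcon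
    have h1 := caseA i j hij hx hcon'
    have h2 := caseA j i (hs _ _ hij) (by rw [xS]; exact hx) (by rw [sS]; exact hcon')
    have h3 := weak i j hij (by rw [hx]; norm_num) hcon'
    have h4 := F1 i j hij h3.1.ge
    linarith
  · have hxp : 0 < xstar i j := by rw [hx]; norm_num
    rcases le_or_gt (s i j) 0 with h | h
    · exact (weak i j hij hxp h).1
    · exfalso
      have h1 := caseB i j hij hx h
      have h2 := caseB j i (hs _ _ hij) (by rw [xS]; exact hx) (by rw [sS]; exact h)
      have h3 := ye i j hij hxp
      linarith
end
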